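/- arXiv:2507.20274 — 4 statements merged into one kernel-verified Lean document; each statement's English description precedes it below -/
import Mathlib

section
/- Convolution estimate for tail functions (Lemma 4.3): There exists a constant C_d > 0, depending only on d, such that for every integer L ≥ 2 and all 0 ≤ u ≤ t < 1 satisfying either (i) 1−u ≥ 1−t ≥ L^{-2}, or (ii) L^{-d} ≤ 1−t ≤ 1−u ≤ L^{-2}, and for all a, b ∈ ℤ_L^d: Σ_{c∈ℤ_L^d} T_u(|a−c|)·T_t(|c−b|) ≤ (C_d/(1−u)) · T_t(|a−b|). -/
/-- Periodic L¹ distance on the discrete torus `(ZMod n)^d`. -/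
def torusDist {n d : ℕ} (x y : Fin d → ZMod n) : ℕ :=
  ∑ i, min (x i - y i).val (y i - x i).val

/-- The diffusion length scale `ℓ_t := min((1−t)^{−1/2}, L)`. -/
noncomputable def ellT (L : ℕ) (t : ℝ) : ℝ := min ((1 - t) ^ (-(1 / 2 : ℝ))) (L : ℝ)

/-- The tail function `T_t(r) := (1/(r^{d−2}+1) + 1/(L^d(1−t)))·exp(−(r/ℓ_t)^{1/2})`. -/
noncomputable def tailT (d L : ℕ) (t r : ℝ) : ℝ :=
  ((r ^ (d - 2) + 1)⁻¹ + ((L : ℝ) ^ d * (1 - t))⁻¹) *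
    Real.exp (-((r / ellT L t) ^ ((1 : ℝ) / 2)))

lemma torusDist_eq {n d : ℕ} [NeZero n] (x y : Fin d → ZMod n) :
    torusDist x y = ∑ i, (x i - y i).valMinAbs.natAbs := by
  unfold torusDist
  refine Finset.sum_congr rfl fun i _ => ?_
  rw [ZMod.valMinAbs_natAbs_eq_min, ← neg_sub (x i) (y i), ZMod.neg_val]
  split_ifs with h
  · simp [h]
  · rfl

lemma torusDist_comm' {n d : ℕ} (x y : Fin d → ZMod n) : torusDist x y = torusDist y x := by
  unfold torusDist
  exact Finset.sum_congr rfl fun i _ => min_comm _ _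

lemma torusDist_tri {n d : ℕ} [NeZero n] (x y z : Fin d → ZMod n) :
    torusDist x z ≤ torusDist x y + torusDist y z := by
  simp only [torusDist_eq, ← Finset.sum_add_distrib]
  refine Finset.sum_le_sum fun i _ => ?_
  have := ZMod.natAbs_valMinAbs_add_le (x i - y i) (y i - z i)
  rw [sub_add_sub_cancel] at this
  exact this.trans (Int.natAbs_add_le _ _)

lemma shell_card {L n : ℕ} [NeZero L] (a : Fin (n+1) → ZMod L) (k : ℕ) :
    (Finset.univ.filter fun c => torusDist a c = k).card ≤ 2 * (2 * k + 1) ^ n := by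
  classical
  have key : (Finset.univ.filter fun c => torusDist a c = k).card ≤
      ((Fintype.piFinset (fun _ : Fin n => Finset.Icc (-(k:ℤ)) k)) ×ˢ
        (Finset.univ : Finset Bool)).card := by
    refine Finset.card_le_card_of_injOn
      (fun c => (fun i => (a i.succ - c i.succ).valMinAbs,
        decide (0 ≤ (a 0 - c 0).valMinAbs))) ?_ ?_
    · intro c hc
      simp only [Finset.coe_filter, Finset.mem_univ, true_and, Set.mem_ofPred_eq] at hc
      rw [torusDist_eq, Fin.sum_univ_succ] at hc
      simp only [Finset.coe_product, Set.mem_prod, Finset.mem_coe, Fintype.mem_piFinset,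
        Finset.mem_Icc, Finset.mem_univ, and_true]
      intro i
      have := Finset.single_le_sum (f := fun i : Fin n => (a i.succ - c i.succ).valMinAbs.natAbs)
        (fun _ _ => Nat.zero_le _) (Finset.mem_univ i)
      omega
    · intro c hc c' hc' h
      simp only [Finset.coe_filter, Finset.mem_univ, true_and, Set.mem_ofPred_eq] at hc hc'
      rw [torusDist_eq, Fin.sum_univ_succ] at hc hc'
      simp only [Prod.mk.injEq, decide_eq_decide] at h
      obtain ⟨h1, h2⟩ := h
      have h3 : ∀ i : Fin n, (a i.succ - c i.succ).valMinAbs = (a i.succ - c' i.succ).valMinAbs :=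
        fun i => congrFun h1 i
      simp only [h3] at hc
      have h4 : (a 0 - c 0).valMinAbs = (a 0 - c' 0).valMinAbs := by omega
      funext i
      refine Fin.cases ?_ (fun j => ?_) i
      · simpa using ZMod.injective_valMinAbs h4
      · simpa using ZMod.injective_valMinAbs (h3 j)
  refine key.trans (le_of_eq ?_)
  rw [Finset.card_product, Fintype.card_piFinset]
  simp only [Int.card_Icc, Finset.prod_const, Finset.card_univ, Fintype.card_fin, Fintype.card_bool]
  rw [mul_comm]
  congr 2
  omega

lemma exp_core {x y r l m : ℝ} (hx : 0 ≤ x) (hy : 0 ≤ y) (hr : r ≤ x + y)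
    (hl : 0 < l) (hlm : l ≤ m) :
    √(r / m) + √(min x y / l) / 2 ≤ √(x / l) + √(y / m) := by
  have hm : 0 < m := hl.trans_le hlm
  rw [Real.sqrt_div' _ hm.le, Real.sqrt_div' _ hl.le, Real.sqrt_div' _ hl.le,
    Real.sqrt_div' _ hm.le]
  have e : √(min x y) = min √x √y := Monotone.map_min (f := Real.sqrt) (fun _ _ h => Real.sqrt_le_sqrt h)
  have hq : 0 < 1 / √m := by positivity
  have hpq : 1 / √m ≤ 1 / √l := by
    apply one_div_le_one_div_of_le (by positivity) (Real.sqrt_le_sqrt hlm)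
  have hR : √r ≤ √x + √y - √(min x y) / 2 := by
    have hX := Real.sqrt_nonneg x
    have hY := Real.sqrt_nonneg y
    have hXs := Real.sq_sqrt hx
    have hYs := Real.sq_sqrt hy
    rw [e]
    apply Real.sqrt_le_iff.2
    rcases le_total √x √y with h | h
    · rw [min_eq_left h]
      constructor <;> nlinarith
    · rw [min_eq_right h]
      constructor <;> nlinarith
  have hM : √(min x y) ≤ √x := Real.sqrt_le_sqrt (min_le_left _ _)
  have hM0 := Real.sqrt_nonneg (min x y)
  simp only [div_eq_mul_one_div (√_) (√_)]
  generalize 1 / √m = q at *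
  generalize 1 / √l = p at *
  nlinarith [mul_le_mul_of_nonneg_right hR hq.le,
    mul_le_mul_of_nonneg_right hM (sub_nonneg.2 hpq), mul_nonneg hM0 (sub_nonneg.2 hpq)]

lemma exp_decay {s : ℝ} (hs : 0 ≤ s) :
    Real.exp (-(√s / 2)) ≤ (2 ^ 8 * (Nat.factorial 8 : ℝ) * Real.exp 1) / (1 + s) ^ 4 := by
  have h := Real.pow_div_factorial_le_exp (1 + √s / 2) (by positivity) 8
  have hS := Real.sqrt_nonneg s
  have hss := Real.sq_sqrt hs
  rw [div_le_iff₀ (by positivity), Real.exp_add] at h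
  rw [le_div_iff₀ (by positivity), Real.exp_neg, inv_mul_le_iff₀ (Real.exp_pos _)]
  have h2 : (1 + s) ^ 4 ≤ 2 ^ 8 * (1 + √s / 2) ^ 8 := by
    have : (1 + s) ≤ (2 * (1 + √s/2)) ^ 2 := by nlinarith
    calc (1 + s) ^ 4 ≤ ((2 * (1 + √s/2)) ^ 2) ^ 4 := by gcongr
      _ = _ := by ring
  nlinarith

lemma sum_cube {l : ℝ} (hl : 1 ≤ l) (N : ℕ) :
    ∑ k ∈ Finset.range N, 1 / (l + k) ^ 3 ≤ 2 / l ^ 2 := by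
  have : ∑ k ∈ Finset.range N, 1 / (l + k) ^ 3 ≤ 2 / l ^ 2 - 2 / (l + N) ^ 2 := by
    induction N with
    | zero => simp
    | succ n ih =>
      rw [Finset.sum_range_succ]
      have hz : 1 ≤ l + n := by have : (0:ℝ) ≤ n := n.cast_nonneg; linarith
      have : 1 / (l + n) ^ 3 ≤ 2 / (l + n) ^ 2 - 2 / (l + (n + 1 : ℕ)) ^ 2 := by
        push_cast
        rw [← add_assoc]
        generalize l + (n:ℝ) = z at hz
        rw [div_sub_div _ _ (by positivity) (by positivity), div_le_div_iff₀ (by positivity) (by positivity)]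
        have : 0 ≤ z ^ 2 * (3 * z ^ 3 - z - 0) := by
          apply mul_nonneg (by positivity)
          nlinarith [mul_pos (show 0 < z by linarith) (show 0 < z by linarith)]
        nlinarith [pow_pos (show 0 < z by linarith) 2, pow_pos (show 0 < z by linarith) 3, pow_pos (show 0 < z by linarith) 4,
          pow_le_pow_left₀ zero_le_one hz 2, mul_nonneg (pow_pos (show 0 < z by linarith) 2).le (show 0 ≤ z^2-1 by nlinarith), mul_nonneg (pow_pos (show 0 < z by linarith) 3).le (show 0 ≤ z-1 by nlinarith)]
      linarith
  have h2 : 0 ≤ 2 / (l + N) ^ 2 := by positivity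
  linarith

noncomputable def gFun (p : ℕ) (l x : ℝ) : ℝ := (x ^ p + 1)⁻¹ * Real.exp (-(√(x / l) / 2))

lemma gFun_shell (p k : ℕ) {l : ℝ} (hl : 1 ≤ l) :
    (2 * (2 * (k:ℝ) + 1) ^ (p + 1)) * gFun p l k ≤
      (2 * 2 ^ (p + 1) * 2 ^ p * (2 ^ 8 * (Nat.factorial 8 : ℝ) * Real.exp 1)) * l ^ 4 *
        (1 / (l + k) ^ 3) := by
  have hl0 : 0 < l := by linarith
  have hk : (0:ℝ) ≤ k := k.cast_nonneg
  have h1 := exp_decay (s := k / l) (by positivity)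
  set C := (2 ^ 8 * (Nat.factorial 8 : ℝ) * Real.exp 1) with hC
  have hC0 : 0 < C := by positivity
  have h2 : ((k:ℝ) + 1) ^ p ≤ 2 ^ p * ((k:ℝ) ^ p + 1) := by
    rcases Nat.eq_zero_or_pos k with h | h
    · subst h
      have : (1:ℝ) ≤ 2 ^ p := one_le_pow₀ (by norm_num)
      have h0 : (0:ℝ) ≤ 0 ^ p := by positivity
      simp only [Nat.cast_zero, zero_add, one_pow]
      nlinarith
    · have h' : (1:ℝ) ≤ k := by exact_mod_cast h
      calc ((k:ℝ) + 1) ^ p ≤ (2 * k) ^ p := by gcongr; linarith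
        _ = 2 ^ p * (k:ℝ) ^ p := mul_pow _ _ _
        _ ≤ _ := by gcongr; linarith
  have h3 : ((k:ℝ) + 1) ^ p * ((k:ℝ) ^ p + 1)⁻¹ ≤ 2 ^ p := by
    rw [← div_eq_mul_inv, div_le_iff₀ (by positivity)]
    exact h2
  have h4 : (2 * (k:ℝ) + 1) ^ (p + 1) ≤ 2 ^ (p + 1) * ((k:ℝ) + 1) ^ p * (l + k) := by
    calc (2 * (k:ℝ) + 1) ^ (p + 1) ≤ (2 * (k + 1)) ^ (p + 1) := by gcongr; linarith
      _ = 2 ^ (p + 1) * ((k:ℝ) + 1) ^ p * (k + 1) := by rw [mul_pow]; ring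
      _ ≤ _ := by gcongr 2 ^ (p + 1) * ((k:ℝ) + 1) ^ p * ?_; linarith
  have h5 : C / (1 + k / l) ^ 4 = C * l ^ 4 / (l + k) ^ 4 := by
    field_simp
  rw [h5] at h1
  unfold gFun
  calc (2 * (2 * (k:ℝ) + 1) ^ (p + 1)) * (((k:ℝ) ^ p + 1)⁻¹ * Real.exp (-(√(k / l) / 2)))
      ≤ (2 * (2 ^ (p + 1) * ((k:ℝ) + 1) ^ p * (l + k))) *
          (((k:ℝ) ^ p + 1)⁻¹ * (C * l ^ 4 / (l + k) ^ 4)) := by gcongr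
    _ = 2 * 2 ^ (p + 1) * (((k:ℝ) + 1) ^ p * ((k:ℝ) ^ p + 1)⁻¹) * C * l ^ 4 * (1 / (l + k) ^ 3) := by
        field_simp
    _ ≤ _ := by gcongr

lemma gFun_sum (p : ℕ) : ∃ C : ℝ, 0 < C ∧ ∀ (L : ℕ) [NeZero L] (l : ℝ), 1 ≤ l →
    ∀ a : Fin (p + 2) → ZMod L, ∑ c, gFun p l (torusDist a c) ≤ C * l ^ 2 := by
  refine ⟨2 * (2 * 2 ^ (p + 1) * 2 ^ p * (2 ^ 8 * (Nat.factorial 8 : ℝ) * Real.exp 1)),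
    by positivity, ?_⟩
  intro L _ l hl a
  set K := (2 * 2 ^ (p + 1) * 2 ^ p * (2 ^ 8 * (Nat.factorial 8 : ℝ) * Real.exp 1)) with hK
  have hK0 : 0 < K := by positivity
  have hl0 : 0 < l := by linarith
  set N := ∑ c, torusDist a c + 1
  have hmaps : ∀ c ∈ (Finset.univ : Finset (Fin (p+2) → ZMod L)), torusDist a c ∈ Finset.range N := by
    intro c hc
    have := Finset.single_le_sum (f := fun c => torusDist a c) (fun _ _ => Nat.zero_le _) hc
    exact Finset.mem_range.2 (by omega)
  rw [← Finset.sum_fiberwise_of_maps_to hmaps]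
  calc ∑ k ∈ Finset.range N, ∑ c with torusDist a c = k, gFun p l (torusDist a c)
      ≤ ∑ k ∈ Finset.range N, K * l ^ 4 * (1 / (l + k) ^ 3) := by
        refine Finset.sum_le_sum fun k _ => ?_
        refine le_trans ?_ (gFun_shell p k hl)
        rw [Finset.sum_congr rfl (g := fun _ => gFun p l k)
          (fun c hc => by rw [(Finset.mem_filter.1 hc).2]), Finset.sum_const, nsmul_eq_mul]
        have h0 : 0 ≤ gFun p l k := by unfold gFun; positivity
        refine mul_le_mul_of_nonneg_right ?_ h0
        exact_mod_cast shell_card a k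
    _ = K * l ^ 4 * ∑ k ∈ Finset.range N, (1 / (l + k) ^ 3) := by rw [Finset.mul_sum]
    _ ≤ K * l ^ 4 * (2 / l ^ 2) := by
        gcongr
        exact sum_cube hl N
    _ = 2 * K * l ^ 2 := by field_simp

lemma term_bound (p : ℕ) {x y r l m A B : ℝ} (hx : 0 ≤ x) (hy : 0 ≤ y) (hr0 : 0 ≤ r)
    (hr : r ≤ x + y) (hl : 0 < l) (hlm : l ≤ m) (hA : 0 ≤ A) (hAB : A ≤ B) :
    (((x ^ p + 1)⁻¹ + A) * Real.exp (-√(x / l))) * (((y ^ p + 1)⁻¹ + B) * Real.exp (-√(y / m))) ≤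
      (((2 ^ p + 2) * ((r ^ p + 1)⁻¹ + B)) * (gFun p l x + gFun p l y) + A * B) *
        Real.exp (-√(r / m)) := by
  have hB : 0 ≤ B := hA.trans hAB
  set z := min x y with hz
  have hz0 : 0 ≤ z := le_min hx hy
  set f : ℝ → ℝ := fun x => (x ^ p + 1)⁻¹ with hf
  have hf0 : ∀ x, 0 ≤ x → 0 ≤ f x := fun x hx => by simp only [hf]; positivity
  have hanti : ∀ x y, 0 ≤ x → x ≤ y → f y ≤ f x := by
    intro x y hx hxy
    simp only [hf]
    gcongr
  have hhalf : ∀ w, 0 ≤ w → r ≤ 2 * w → f w ≤ 2 ^ p * f r := by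
    intro w hw hrw
    simp only [hf]
    rw [inv_le_iff_one_le_mul₀ (by positivity), mul_comm, ← mul_assoc, ← div_eq_mul_inv,
      le_div_iff₀ (by positivity), one_mul]
    have : r ^ p ≤ (2 * w) ^ p := by gcongr
    rw [mul_pow] at this
    have : (1:ℝ) ≤ 2 ^ p := one_le_pow₀ (by norm_num)
    nlinarith
  have hff : f x * f y ≤ 2 ^ p * f r * f z := by
    rcases le_total x y with h | h
    · rw [hz, min_eq_left h, mul_comm]
      exact mul_le_mul_of_nonneg_right (hhalf y hy (by linarith)) (hf0 x hx)
    · rw [hz, min_eq_right h]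
      exact mul_le_mul_of_nonneg_right (hhalf x hx (by linarith)) (hf0 y hy)
  have hxz := hanti z x hz0 (min_le_left _ _)
  have hyz := hanti z y hz0 (min_le_right _ _)
  have hfz := hf0 z hz0
  have hfr := hf0 r hr0
  have hp : (1:ℝ) ≤ 2 ^ p := one_le_pow₀ (by norm_num)
  have hprod : (f x + A) * (f y + B) ≤ ((2 ^ p + 2) * (f r + B)) * f z + A * B := by
    have e1 : f x * B ≤ f z * B := by gcongr
    have e2 : A * f y ≤ B * f z := mul_le_mul hAB hyz (hf0 y hy) hB
    nlinarith [mul_nonneg hfr hfz, mul_nonneg hB hfz, mul_nonneg (mul_nonneg hB hfz) (sub_nonneg.2 hp)]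
  have hexp : Real.exp (-√(x / l)) * Real.exp (-√(y / m)) ≤
      Real.exp (-(√(z / l) / 2)) * Real.exp (-√(r / m)) := by
    rw [← Real.exp_add, ← Real.exp_add]
    apply Real.exp_le_exp.2
    have := exp_core hx hy hr hl hlm
    linarith
  have hg0 : ∀ w, 0 ≤ w → 0 ≤ gFun p l w := fun w hw => by unfold gFun; positivity
  have hgz : f z * Real.exp (-(√(z / l) / 2)) ≤ gFun p l x + gFun p l y := by
    change gFun p l z ≤ _
    rcases le_total x y with h | h
    · rw [hz, min_eq_left h]; linarith [hg0 y hy]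
    · rw [hz, min_eq_right h]; linarith [hg0 x hx]
  have hE1 : Real.exp (-(√(z / l) / 2)) ≤ 1 := by
    apply Real.exp_le_one_iff.2
    have := Real.sqrt_nonneg (z / l)
    linarith
  change ((f x + A) * _) * ((f y + B) * _) ≤ (((2 ^ p + 2) * (f r + B)) * _ + _) * _
  have hfx := hf0 x hx
  have hfy := hf0 y hy
  calc ((f x + A) * Real.exp (-√(x / l))) * ((f y + B) * Real.exp (-√(y / m)))
      = ((f x + A) * (f y + B)) * (Real.exp (-√(x / l)) * Real.exp (-√(y / m))) := by ring
    _ ≤ (((2 ^ p + 2) * (f r + B)) * f z + A * B) *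
        (Real.exp (-(√(z / l) / 2)) * Real.exp (-√(r / m))) := by gcongr
    _ = (((2 ^ p + 2) * (f r + B)) * (f z * Real.exp (-(√(z / l) / 2))) +
          A * B * Real.exp (-(√(z / l) / 2))) * Real.exp (-√(r / m)) := by ring
    _ ≤ (((2 ^ p + 2) * (f r + B)) * (gFun p l x + gFun p l y) + A * B * 1) *
          Real.exp (-√(r / m)) := by gcongr
    _ = _ := by rw [mul_one]

/-- **Convolution estimate for tail functions (Lemma 4.3).**
There is a constant `C_d > 0`, depending only on `d`, such that for every `L ≥ 2` and all
`0 ≤ u ≤ t < 1` satisfying either `1−u ≥ 1−t ≥ L^{−2}` or `L^{−d} ≤ 1−t ≤ 1−u ≤ L^{−2}`,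
and all `a, b ∈ ℤ_L^d`:
`Σ_c T_u(|a−c|)·T_t(|c−b|) ≤ (C_d/(1−u))·T_t(|a−b|)`. -/
theorem tail_function_convolution (d : ℕ) (hd : 3 ≤ d) :
    ∃ C : ℝ, 0 < C ∧
      ∀ (L : ℕ) [NeZero L], 2 ≤ L →
        ∀ u t : ℝ, 0 ≤ u → u ≤ t → t < 1 →
          (((L : ℝ) ^ 2)⁻¹ ≤ 1 - t ∨
            (((L : ℝ) ^ d)⁻¹ ≤ 1 - t ∧ 1 - u ≤ ((L : ℝ) ^ 2)⁻¹)) →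
          ∀ a b : Fin d → ZMod L,
            ∑ c : Fin d → ZMod L,
                tailT d L u (torusDist a c) * tailT d L t (torusDist c b) ≤
              C / (1 - u) * tailT d L t (torusDist a b) := by

  obtain ⟨p, rfl⟩ : ∃ p, d = p + 2 := ⟨d - 2, by omega⟩
  obtain ⟨K, hK, hsum⟩ := gFun_sum p
  refine ⟨(2 ^ p + 2) * (2 * K) + 1, by positivity, ?_⟩
  intro L _ hL u t hu hut ht _ a b
  have hu1 : 0 < 1 - u := by linarith
  have ht1 : 0 < 1 - t := by linarith
  have hLr : (2:ℝ) ≤ L := by exact_mod_cast hL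
  have hl1 : 1 ≤ ellT L u := by
    refine le_min ?_ (by linarith)
    exact Real.one_le_rpow_of_pos_of_le_one_of_nonpos hu1 (by linarith) (by norm_num)
  have hlm : ellT L u ≤ ellT L t := by
    refine min_le_min ?_ le_rfl
    exact Real.rpow_le_rpow_of_nonpos ht1 (by linarith) (by norm_num)
  have hl2 : ellT L u ^ 2 ≤ 1 / (1 - u) := by
    calc ellT L u ^ 2 ≤ ((1 - u) ^ (-(1 / 2 : ℝ))) ^ 2 :=
          pow_le_pow_left₀ (zero_le_one.trans hl1) (min_le_left _ _) 2
      _ = 1 / (1 - u) := by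
          rw [← Real.rpow_natCast, ← Real.rpow_mul hu1.le]
          norm_num
          rw [Real.rpow_neg_one]
  have hl0 : 0 < ellT L u := by linarith
  set A := ((L : ℝ) ^ (p + 2) * (1 - u))⁻¹ with hA
  set B := ((L : ℝ) ^ (p + 2) * (1 - t))⁻¹ with hB
  have hA0 : 0 ≤ A := by positivity
  have hAB : A ≤ B := by
    rw [hA, hB]
    gcongr
  have hB0 : 0 ≤ B := hA0.trans hAB
  have hcard : ((Finset.univ : Finset (Fin (p+2) → ZMod L)).card : ℝ) * A = 1 / (1 - u) := by
    rw [Finset.card_univ, Fintype.card_fun, ZMod.card, Fintype.card_fin, hA]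
    push_cast
    field_simp
  simp only [tailT, ← Real.sqrt_eq_rpow, Nat.add_sub_cancel]
  have hs1 := hsum L (ellT L u) hl1 a
  have hs2 := hsum L (ellT L u) hl1 b
  set r : ℝ := (torusDist a b : ℝ) with hr
  set F := (r ^ p + 1)⁻¹ with hF
  have hF0 : 0 ≤ F := by positivity
  calc _ ≤ ∑ c : Fin (p+2) → ZMod L, (((2 ^ p + 2) * (F + B)) *
          (gFun p (ellT L u) (torusDist a c) + gFun p (ellT L u) (torusDist b c)) + A * B) *
        Real.exp (-√(r / ellT L t)) := by
        refine Finset.sum_le_sum fun c _ => ?_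
        rw [torusDist_comm' b c]
        refine term_bound p (by positivity) (by positivity) (by positivity) ?_ hl0 hlm hA0 hAB
        rw [hr]
        exact_mod_cast torusDist_tri a c b
    _ = (((2 ^ p + 2) * (F + B)) * (∑ c, gFun p (ellT L u) (torusDist a c) +
          ∑ c, gFun p (ellT L u) (torusDist b c)) +
          ((Finset.univ : Finset (Fin (p+2) → ZMod L)).card : ℝ) * A * B) *
        Real.exp (-√(r / ellT L t)) := by
        rw [← Finset.sum_mul, Finset.sum_add_distrib, ← Finset.mul_sum, Finset.sum_add_distrib,
          Finset.sum_const, nsmul_eq_mul, mul_assoc (Finset.card _ : ℝ)]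
    _ ≤ (((2 ^ p + 2) * (F + B)) * (K * (1 / (1 - u)) + K * (1 / (1 - u))) +
          1 / (1 - u) * (F + B)) * Real.exp (-√(r / ellT L t)) := by
        rw [hcard]
        gcongr
        · exact hs1.trans (by gcongr)
        · exact hs2.trans (by gcongr)
        · linarith
    _ = _ := by ring
end

section
/- Ward's inequality for G-loops (Lemma 5.1, inequality (5.2)): Let n ≥ 2 and 1 ≤ k ≤ n−1. There exists a constant C_n > 0, depending only on n, such that for every choice of a_1,…,a_{n−1} ∈ ℤ_L^d: max_{σ∈{+,−}^n} Σ_{a_n∈ℤ_L^d} |L^{(n)}_{σ,(a_1,…,a_{n−1},a_n)}| ≤ (C_n/(W^d·η)) · ( max_{σ'∈{+,−}^{2k−1}, b∈(ℤ_L^d)^{2k−1}} |L^{(2k−1)}_{σ',b}| · max_{σ''∈{+,−}^{2n−2k−1}, b'∈(ℤ_L^d)^{2n−2k−1}} |L^{(2n−2k−1)}_{σ'',b'}| )^{1/2}. -/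
/-- The rescaled block projection `E_a = W^{-d}·Id_a` associated with the fiber of `a`
under the block map `π`; here `Wd = W^d`. -/
noncomputable def Eblk {ι B : Type} [DecidableEq ι] [DecidableEq B]
    (Wd : ℕ) (π : ι → B) (a : B) : Matrix ι ι ℂ :=
  Matrix.diagonal fun x => if π x = a then ((Wd : ℂ))⁻¹ else 0

/-- The pair of resolvents `G(+) = (H − z)⁻¹` and `G(−) = (H − conj z)⁻¹`. -/
noncomputable def resolv {ι : Type} [Fintype ι] [DecidableEq ι]
    (H : Matrix ι ι ℂ) (z : ℂ) : Bool → Matrix ι ι ℂ :=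
  fun b => if b then (H - z • (1 : Matrix ι ι ℂ))⁻¹
    else (H - (starRingEnd ℂ) z • (1 : Matrix ι ι ℂ))⁻¹

/-- The `n`-loop `L^{(n)}_{σ,a} := Tr(G(σ_1)E_{a_1} ⋯ G(σ_n)E_{a_n})`. -/
noncomputable def gLoop {ι B : Type} [Fintype ι] [DecidableEq ι] [DecidableEq B]
    (Wd : ℕ) (π : ι → B) (Gm : Bool → Matrix ι ι ℂ)
    (n : ℕ) (σ : Fin n → Bool) (a : Fin n → B) : ℂ :=
  Matrix.trace (((List.finRange n).map fun i => Gm (σ i) * Eblk Wd π (a i)).prod)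

section WardAux
set_option linter.unusedSectionVars false
open Matrix

variable {ι B : Type} [Fintype ι] [DecidableEq ι] [DecidableEq B]

noncomputable def wPr (Wd : ℕ) (π : ι → B) (Gm : Bool → Matrix ι ι ℂ) (l : List (Bool × B)) :
    Matrix ι ι ℂ := (l.map fun p => Gm p.1 * Eblk Wd π p.2).prod

noncomputable def wS (Wd : ℕ) (π : ι → B) (a : B) : Matrix ι ι ℂ :=
  Matrix.diagonal fun x => if π x = a then (((Real.sqrt Wd)⁻¹ : ℝ) : ℂ) else 0

lemma wS_mul (Wd : ℕ) (π : ι → B) (a : B) : wS Wd π a * wS Wd π a = Eblk Wd π a := by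
  unfold wS Eblk
  rw [Matrix.diagonal_mul_diagonal]
  congr 1
  ext x
  split_ifs
  · rw [← Complex.ofReal_mul, ← mul_inv, Real.mul_self_sqrt (Nat.cast_nonneg _)]
    simp
  · simp

lemma wS_herm (Wd : ℕ) (π : ι → B) (a : B) : (wS Wd π a)ᴴ = wS Wd π a := by
  unfold wS
  rw [Matrix.diagonal_conjTranspose]
  congr 1
  ext x
  simp only [Pi.star_apply]
  split_ifs <;> simp

lemma Eblk_herm (Wd : ℕ) (π : ι → B) (a : B) : (Eblk Wd π a)ᴴ = Eblk Wd π a := by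
  unfold Eblk
  rw [Matrix.diagonal_conjTranspose]
  congr 1
  ext x
  simp only [Pi.star_apply]
  split_ifs <;> simp

lemma wPr_append (Wd : ℕ) (π : ι → B) (Gm : Bool → Matrix ι ι ℂ) (l l' : List (Bool × B)) :
    wPr Wd π Gm (l ++ l') = wPr Wd π Gm l * wPr Wd π Gm l' := by
  simp [wPr]

lemma wPr_cons (Wd : ℕ) (π : ι → B) (Gm : Bool → Matrix ι ι ℂ) (p) (l' : List (Bool × B)) :
    wPr Wd π Gm (p :: l') = Gm p.1 * Eblk Wd π p.2 * wPr Wd π Gm l' := by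
  simp [wPr]

lemma wPr_nil (Wd : ℕ) (π : ι → B) (Gm : Bool → Matrix ι ι ℂ) :
    wPr Wd π Gm [] = 1 := by
  simp [wPr]

lemma isUnit_sub (H : Matrix ι ι ℂ) (hH : H.IsHermitian) (z : ℂ) (hz : z.im ≠ 0) :
    IsUnit (H - z • (1 : Matrix ι ι ℂ)) := by
  have h : z ∉ spectrum ℂ H := by
    rw [hH.spectrum_eq_image_range]
    rintro ⟨r, -, hr⟩
    apply hz
    rw [← hr]
    simp
  rw [spectrum.notMem_iff, Algebra.algebraMap_eq_smul_one] at h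
  rw [← neg_sub]
  exact h.neg

lemma resolv_herm (H : Matrix ι ι ℂ) (hH : H.IsHermitian) (z : ℂ) (s : Bool) :
    (resolv H z s)ᴴ = resolv H z (!s) := by
  cases s <;> simp [resolv, Matrix.conjTranspose_nonsing_inv, hH.eq]

lemma resolv_ward (H : Matrix ι ι ℂ) (hH : H.IsHermitian) (z : ℂ) (hz : 0 < z.im) (s : Bool) :
    (resolv H z s)ᴴ * resolv H z s =
      (2 * z.im * Complex.I)⁻¹ • (resolv H z true - resolv H z false) := by
  have h1 := isUnit_sub H hH z hz.ne'
  have h2 := isUnit_sub H hH (starRingEnd ℂ z) (by simpa using hz.ne')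
  have hne : (2 * z.im * Complex.I : ℂ) ≠ 0 := by
    simp [hz.ne']
  have hzz : z - starRingEnd ℂ z = 2 * z.im * Complex.I := by
    rw [Complex.sub_conj]; push_cast; ring
  rw [resolv_herm H hH]
  rw [Matrix.isUnit_iff_isUnit_det] at h1 h2
  rw [eq_inv_smul_iff₀ hne, ← hzz]
  set A := H - z • (1 : Matrix ι ι ℂ) with hA
  set A' := H - (starRingEnd ℂ z) • (1 : Matrix ι ι ℂ) with hA'
  have hd : A' - A = (z - starRingEnd ℂ z) • (1 : Matrix ι ι ℂ) := by
    rw [hA, hA', sub_smul]; abel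
  have e1 : A⁻¹ - A'⁻¹ = (z - starRingEnd ℂ z) • (A⁻¹ * A'⁻¹) := by
    calc A⁻¹ - A'⁻¹ = A⁻¹ * (A' - A) * A'⁻¹ := by
          rw [mul_sub, sub_mul, Matrix.nonsing_inv_mul _ h1, mul_assoc,
            Matrix.mul_nonsing_inv _ h2]; simp
      _ = _ := by rw [hd]; simp
  have e2 : A⁻¹ - A'⁻¹ = (z - starRingEnd ℂ z) • (A'⁻¹ * A⁻¹) := by
    calc A⁻¹ - A'⁻¹ = A'⁻¹ * (A' - A) * A⁻¹ := by
          rw [mul_sub, sub_mul, Matrix.nonsing_inv_mul _ h2, mul_assoc,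
            Matrix.mul_nonsing_inv _ h1]; simp
      _ = _ := by rw [hd]; simp
  cases s
  · simpa [resolv] using e1.symm
  · simpa [resolv] using e2.symm

lemma word_adj (Wd : ℕ) (π : ι → B) (H : Matrix ι ι ℂ) (hH : H.IsHermitian) (z : ℂ)
    (l : List (Bool × B)) (s : Bool) : ∃ (l' : List (Bool × B)) (s' : Bool), l'.length = l.length ∧
      (wPr Wd π (resolv H z) l * resolv H z s)ᴴ = wPr Wd π (resolv H z) l' * resolv H z s' := by
  induction l with
  | nil => exact ⟨[], !s, rfl, by simp [wPr_nil, resolv_herm H hH]⟩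
  | cons p l ih =>
    obtain ⟨l', s', h1, h2⟩ := ih
    refine ⟨l' ++ [(s', p.2)], !p.1, by simp [h1], ?_⟩
    rw [wPr_cons, wPr_append, mul_assoc, Matrix.conjTranspose_mul, h2,
      Matrix.conjTranspose_mul, Eblk_herm, resolv_herm H hH, wPr_cons, wPr_nil]
    simp only [mul_assoc, mul_one, one_mul]

lemma word_sq (Wd : ℕ) (π : ι → B) (H : Matrix ι ι ℂ) (hH : H.IsHermitian) (z : ℂ) (hz : 0 < z.im)
    (l : List (Bool × B)) (s : Bool) : ∃ (l1 l2 : List (Bool × B)) (t1 t2 : Bool),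
      l1.length = 2 * l.length ∧ l2.length = 2 * l.length ∧
      (wPr Wd π (resolv H z) l * resolv H z s)ᴴ * (wPr Wd π (resolv H z) l * resolv H z s) =
      (2 * z.im * Complex.I)⁻¹ • (wPr Wd π (resolv H z) l1 * resolv H z t1 -
        wPr Wd π (resolv H z) l2 * resolv H z t2) := by
  cases l with
  | nil =>
    refine ⟨[], [], true, false, rfl, rfl, ?_⟩
    simp only [wPr_nil, one_mul]
    exact resolv_ward H hH z hz s
  | cons p l =>
    obtain ⟨l', s', h1, h2⟩ := word_adj Wd π H hH z l s
    refine ⟨l' ++ (s', p.2) :: (true, p.2) :: l, l' ++ (s', p.2) :: (false, p.2) :: l, s, s,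
      by simp [h1]; ring, by simp [h1]; ring, ?_⟩
    have hw := resolv_ward H hH z hz p.1
    set G := resolv H z
    set U := wPr Wd π G l * G s with hU
    have : wPr Wd π G (p :: l) * G s = G p.1 * (Eblk Wd π p.2 * U) := by
      rw [wPr_cons, hU]; simp only [mul_assoc]
    rw [this, Matrix.conjTranspose_mul, Matrix.conjTranspose_mul, h2, Eblk_herm]
    have : wPr Wd π G l' * G s' * Eblk Wd π p.2 * (G p.1)ᴴ * (G p.1 * (Eblk Wd π p.2 * U))
      = wPr Wd π G l' * G s' * Eblk Wd π p.2 * ((G p.1)ᴴ * G p.1) * (Eblk Wd π p.2 * U) := by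
      simp only [mul_assoc]
    rw [this, hw, hU]
    simp only [wPr_append, wPr_cons, mul_sub, sub_mul, mul_smul_comm, smul_mul_assoc, mul_assoc]

noncomputable def wM [Fintype B] (Wd : ℕ) (π : ι → B) (Gm : Bool → Matrix ι ι ℂ) (n : ℕ) : ℝ :=
  ⨆ σ : Fin n → Bool, ⨆ b : Fin n → B, ‖gLoop Wd π Gm n σ b‖

lemma le_wM [Fintype B] (Wd : ℕ) (π : ι → B) (Gm : Bool → Matrix ι ι ℂ) (n : ℕ)
    (l : List (Bool × B)) (hl : l.length = n) :
    ‖Matrix.trace (wPr Wd π Gm l)‖ ≤ wM Wd π Gm n := by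
  subst hl
  have : wPr Wd π Gm l = ((List.finRange l.length).map fun i =>
      Gm (l.get i).1 * Eblk Wd π (l.get i).2).prod := by
    unfold wPr
    conv_lhs => rw [← List.ofFn_get l, List.ofFn_eq_map]
    rw [List.map_map]; rfl
  rw [this]
  refine le_trans ?_ (le_ciSup (f := fun σ : Fin l.length → Bool =>
    ⨆ b : Fin l.length → B, ‖gLoop Wd π Gm l.length σ b‖) (Set.finite_range _).bddAbove
    (fun i => (l.get i).1))
  exact le_ciSup (f := fun b : Fin l.length → B => ‖gLoop Wd π Gm l.length
    (fun i => (l.get i).1) b‖) (Set.finite_range _).bddAbove (fun i => (l.get i).2)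

lemma trace_hs (X : Matrix ι ι ℂ) :
    ∑ p : ι × ι, ‖X p.1 p.2‖ ^ 2 = ‖Matrix.trace (Xᴴ * X)‖ := by
  have : Matrix.trace (Xᴴ * X) = ((∑ p : ι × ι, ‖X p.1 p.2‖ ^ 2 : ℝ) : ℂ) := by
    rw [Fintype.sum_prod_type, Finset.sum_comm]
    simp only [Matrix.trace, Matrix.diag, Matrix.mul_apply, Matrix.conjTranspose_apply]
    push_cast
    refine Finset.sum_congr rfl fun i _ => Finset.sum_congr rfl fun j _ => ?_
    exact Complex.conj_mul' _
  rw [this, Complex.norm_real, Real.norm_of_nonneg]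
  positivity

lemma word_hs [Fintype B] (Wd : ℕ) (π : ι → B) (H : Matrix ι ι ℂ) (hH : H.IsHermitian) (z : ℂ)
    (hz : 0 < z.im) (l : List (Bool × B)) (s : Bool) (a : B) (n : ℕ) (hn : 2 * l.length + 1 = n) :
    ∑ p : ι × ι, ‖(wPr Wd π (resolv H z) l * resolv H z s * wS Wd π a) p.1 p.2‖ ^ 2
      ≤ wM Wd π (resolv H z) n / z.im := by
  rw [trace_hs]
  obtain ⟨l1, l2, t1, t2, h1, h2, h⟩ := word_sq Wd π H hH z hz l s
  set G := resolv H z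
  set U := wPr Wd π G l * G s with hU
  have e : Matrix.trace ((U * wS Wd π a)ᴴ * (U * wS Wd π a)) =
      (2 * z.im * Complex.I)⁻¹ * (Matrix.trace (wPr Wd π G (l1 ++ [(t1, a)])) -
        Matrix.trace (wPr Wd π G (l2 ++ [(t2, a)]))) := by
    rw [Matrix.conjTranspose_mul, mul_assoc, Matrix.trace_mul_comm, wS_herm]
    have : Uᴴ * (U * wS Wd π a) * wS Wd π a = (Uᴴ * U) * Eblk Wd π a := by
      rw [← wS_mul]; simp only [mul_assoc]
    rw [this, h, wPr_append, wPr_append, wPr_cons, wPr_cons, wPr_nil, ← Matrix.trace_sub,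
      smul_mul_assoc, Matrix.trace_smul, smul_eq_mul]
    simp only [mul_one, sub_mul, mul_assoc]
  have b1 := le_wM Wd π G n (l1 ++ [(t1, a)]) (by simp; omega)
  have b2 := le_wM Wd π G n (l2 ++ [(t2, a)]) (by simp; omega)
  rw [e, norm_mul]
  have hc : ‖(2 * z.im * Complex.I : ℂ)⁻¹‖ = (2 * z.im)⁻¹ := by
    simp [abs_of_pos hz]
  rw [hc]
  calc _ ≤ (2 * z.im)⁻¹ * (wM Wd π G n + wM Wd π G n) := by
        gcongr
        exact (norm_sub_le _ _).trans (add_le_add b1 b2)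
    _ = _ := by field_simp; ring

lemma wM_nonneg [Fintype B] (Wd : ℕ) (π : ι → B) (Gm : Bool → Matrix ι ι ℂ) (n : ℕ) :
    0 ≤ wM Wd π Gm n :=
  Real.iSup_nonneg fun _ => Real.iSup_nonneg fun _ => norm_nonneg _

lemma sum_diag [Fintype B] (Wd : ℕ) (π : ι → B) (H : Matrix ι ι ℂ) (hH : H.IsHermitian) (z : ℂ)
    (hz : 0 < z.im) (l1 l2 : List (Bool × B)) (s1 s2 : Bool) (a : B) (n1 n2 : ℕ)
    (h1 : 2 * l1.length + 1 = n1) (h2 : 2 * l2.length + 1 = n2) :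
    ∑ x, ‖(wPr Wd π (resolv H z) (l1 ++ (s1, a) :: l2) * resolv H z s2) x x‖ ≤
      (z.im)⁻¹ * Real.sqrt (wM Wd π (resolv H z) n1 * wM Wd π (resolv H z) n2) := by
  obtain ⟨l2', s2', h2', e2⟩ := word_adj Wd π H hH z l2 s2
  have b1 := word_hs Wd π H hH z hz l1 s1 a n1 h1
  have b2 := word_hs Wd π H hH z hz l2' s2' a n2 (by omega)
  set G := resolv H z
  set X := wPr Wd π G l1 * G s1 * wS Wd π a
  set Y := wPr Wd π G l2' * G s2' * wS Wd π a with hY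
  have e : wPr Wd π G (l1 ++ (s1, a) :: l2) * G s2 = X * Yᴴ := by
    rw [hY, ← e2, Matrix.conjTranspose_mul, Matrix.conjTranspose_conjTranspose, wS_herm,
      wPr_append, wPr_cons, ← wS_mul]
    simp only [X, mul_assoc]
  rw [e]
  calc _ ≤ ∑ x, ∑ y, ‖X x y‖ * ‖Y x y‖ := by
        refine Finset.sum_le_sum fun x _ => ?_
        rw [Matrix.mul_apply]
        refine (norm_sum_le _ _).trans (Finset.sum_le_sum fun y _ => ?_)
        rw [norm_mul, Matrix.conjTranspose_apply, norm_star]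
    _ = ∑ p : ι × ι, ‖X p.1 p.2‖ * ‖Y p.1 p.2‖ := by rw [Fintype.sum_prod_type]
    _ ≤ Real.sqrt (∑ p : ι × ι, ‖X p.1 p.2‖ ^ 2) * Real.sqrt (∑ p : ι × ι, ‖Y p.1 p.2‖ ^ 2) :=
        Real.sum_mul_le_sqrt_mul_sqrt _ _ _
    _ ≤ Real.sqrt (wM Wd π G n1 / z.im) * Real.sqrt (wM Wd π G n2 / z.im) := by gcongr
    _ = _ := by
        rw [← Real.sqrt_mul (div_nonneg (wM_nonneg _ _ _ _) hz.le)]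
        have : wM Wd π G n1 / z.im * (wM Wd π G n2 / z.im) =
          ((z.im)⁻¹) ^ 2 * (wM Wd π G n1 * wM Wd π G n2) := by field_simp
        rw [this, Real.sqrt_mul (by positivity), Real.sqrt_sq (by positivity)]

lemma sum_trace [Fintype B] (Wd : ℕ) (π : ι → B) (P : Matrix ι ι ℂ) :
    ∑ b, ‖Matrix.trace (P * Eblk Wd π b)‖ ≤ (Wd : ℝ)⁻¹ * ∑ x, ‖P x x‖ := by
  calc _ ≤ ∑ b, ∑ x, ‖P x x‖ * (if π x = b then (Wd : ℝ)⁻¹ else 0) := by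
        refine Finset.sum_le_sum fun b _ => ?_
        simp only [Matrix.trace, Matrix.diag, Eblk, Matrix.mul_diagonal]
        refine (norm_sum_le _ _).trans (Finset.sum_le_sum fun y _ => ?_)
        rw [norm_mul]
        split_ifs <;> simp
    _ = _ := by
        rw [Finset.sum_comm, Finset.mul_sum]
        refine Finset.sum_congr rfl fun x _ => ?_
        rw [← Finset.mul_sum]
        simp [mul_comm]

lemma gLoop_snoc (Wd : ℕ) (π : ι → B) (Gm : Bool → Matrix ι ι ℂ) (m : ℕ)
    (σ : Fin (m + 2) → Bool) (a' : Fin (m + 1) → B) (b : B) :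
    gLoop Wd π Gm (m + 2) σ (Fin.snoc a' b : Fin (m + 2) → B) =
      Matrix.trace (wPr Wd π Gm (List.ofFn fun i : Fin (m + 1) => (σ i.castSucc, a' i)) *
        Gm (σ (Fin.last _)) * Eblk Wd π b) := by
  unfold gLoop wPr
  rw [List.finRange_succ_last, List.ofFn_eq_map]
  simp [Function.comp_def, mul_assoc]

end WardAux

/-- **Ward's inequality for G-loops (Lemma 5.1, inequality (5.2)).**
For `n = m+2 ≥ 2` there is a constant `C_n > 0`, depending only on `n`, such that for every
`1 ≤ k ≤ n−1` and all fixed `a_1, …, a_{n−1}`: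
`max_σ Σ_{a_n} |L^{(n)}_{σ,(a_1,…,a_n)}|
  ≤ (C_n/(W^d η)) (max_{σ',b}|L^{(2k−1)}_{σ',b}| · max_{σ'',b'}|L^{(2n−2k−1)}_{σ'',b'}|)^{1/2}`. -/
theorem ward_inequality_loops (m : ℕ) :
    ∃ C : ℝ, 0 < C ∧
      ∀ k : ℕ, 1 ≤ k → k ≤ m + 1 →
        ∀ (W L d : ℕ) [NeZero L], 2 ≤ W → 2 ≤ L → 1 ≤ d →
          ∀ (ι : Type) [Fintype ι] [DecidableEq ι], Fintype.card ι = (W * L) ^ d →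
            ∀ π : ι → (Fin d → ZMod L),
              (∀ a, (Finset.univ.filter fun x => π x = a).card = W ^ d) →
              ∀ H : Matrix ι ι ℂ, H.IsHermitian →
                ∀ z : ℂ, 0 < z.im →
                  ∀ (a' : Fin (m + 1) → (Fin d → ZMod L)) (σ : Fin (m + 2) → Bool),
                    ∑ an : Fin d → ZMod L,
                        ‖gLoop (W ^ d) π (resolv H z) (m + 2) σ (Fin.snoc a' an)‖ ≤
                      C / ((W : ℝ) ^ d * z.im) *
                        Real.sqrt
                          ((⨆ σ' : Fin (2 * k - 1) → Bool,
                              ⨆ b : Fin (2 * k - 1) → (Fin d → ZMod L),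
                                ‖gLoop (W ^ d) π (resolv H z) (2 * k - 1) σ' b‖) *
                            (⨆ σ'' : Fin (2 * (m + 2) - 2 * k - 1) → Bool,
                              ⨆ b' : Fin (2 * (m + 2) - 2 * k - 1) → (Fin d → ZMod L),
                                ‖gLoop (W ^ d) π (resolv H z)
                                  (2 * (m + 2) - 2 * k - 1) σ'' b'‖)) := by
  refine ⟨1, one_pos, ?_⟩
  intro k hk1 hk2 W L d _ hW hL hd ι _ _ hcard π hπ H hH z hz a' σ
  simp only [gLoop_snoc]
  refine (sum_trace _ _ _).trans ?_
  set l := List.ofFn fun i : Fin (m + 1) => (σ i.castSucc, a' i) with hl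
  have hlen : l.length = m + 1 := by simp [hl]
  have hk : k - 1 < l.length := by omega
  have hsplit : l = l.take (k - 1) ++ (l[k-1].1, l[k-1].2) :: l.drop (k - 1 + 1) := by
    rw [Prod.mk.eta, ← List.drop_eq_getElem_cons hk, List.take_append_drop]
  have key := sum_diag (W ^ d) π H hH z hz (l.take (k - 1)) (l.drop (k - 1 + 1)) l[k-1].1
    (σ (Fin.last _)) l[k-1].2 (2 * k - 1) (2 * (m + 2) - 2 * k - 1)
    (by rw [List.length_take]; omega) (by rw [List.length_drop]; omega)
  rw [← hsplit] at key
  have hfin : (((W ^ d : ℕ) : ℝ))⁻¹ * ((z.im)⁻¹ * Real.sqrt (wM (W ^ d) π (resolv H z) (2 * k - 1) *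
      wM (W ^ d) π (resolv H z) (2 * (m + 2) - 2 * k - 1))) =
      1 / ((W : ℝ) ^ d * z.im) * Real.sqrt (wM (W ^ d) π (resolv H z) (2 * k - 1) *
      wM (W ^ d) π (resolv H z) (2 * (m + 2) - 2 * k - 1)) := by
    push_cast
    rw [one_div, mul_inv, mul_assoc]
  refine (mul_le_mul_of_nonneg_left key (by positivity)).trans ?_
  exact hfin.le
end

section
/- Generalized Ward's inequality for G-loops (Lemma 5.1, inequality (5.3)): Let n ≥ 4, let 1 ≤ k < j < l ≤ n−1, and let p ≥ 1 be an integer. There exists a constant C_{n,p} > 0, depending only on n and p, such that for every K ∈ ℕ, every map 𝒮 assigning to each a_n ∈ ℤ_L^d a subset 𝒮(a_n) ⊆ ℤ_L^d of cardinality at most K, and every choice of a_i ∈ ℤ_L^d for i ∈ {1,…,n−1}\{j}: max_{σ∈{+,−}^n} Σ_{a_n∈ℤ_L^d} Σ_{a_j∈𝒮(a_n)} |L^{(n)}_{σ,(a_1,…,a_n)}| ≤ (C_{n,p}·K/(W^d·η)) · ( max_{σ',b} |L^{(2k−1)}_{σ',b}| · max_{σ'',b'} |L^{(2n−2l−1)}_{σ'',b'}|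 )^{1/2} · ( max_{σ''',b''} |L^{(2(l−k)p)}_{σ''',b''}| )^{1/(2p)}, where each maximum runs over all sign vectors and index vectors of the indicated lengths. -/
namespace GW

open Matrix
open scoped ComplexOrder
set_option linter.unusedSectionVars false

section general
variable {ι B : Type} [Fintype ι] [DecidableEq ι] [Fintype B] [DecidableEq B]

noncomputable def Qb (w : ℕ) (π : ι → B) (a : B) : Matrix ι ι ℂ :=
  Matrix.diagonal fun x => if π x = a then (((Real.sqrt w)⁻¹ : ℝ) : ℂ) else 0


lemma Qb_mul (w : ℕ) (π : ι → B) (a : B) : Qb w π a * Qb w π a = Eblk w π a := by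
  unfold Qb Eblk
  rw [Matrix.diagonal_mul_diagonal]
  congr 1
  funext x
  split_ifs
  · rw [← Complex.ofReal_mul, ← mul_inv, Real.mul_self_sqrt (Nat.cast_nonneg w)]
    push_cast; rfl
  · simp


lemma Qb_adj (w : ℕ) (π : ι → B) (a : B) : (Qb w π a)ᴴ = Qb w π a := by
  unfold Qb
  rw [Matrix.diagonal_conjTranspose]
  congr 1
  funext x
  simp only [Pi.star_apply]
  split_ifs
  · simp
  · simp


lemma Eblk_adj (w : ℕ) (π : ι → B) (a : B) : (Eblk w π a)ᴴ = Eblk w π a := by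
  unfold Eblk
  rw [Matrix.diagonal_conjTranspose]
  congr 1
  funext x
  simp only [Pi.star_apply]
  split_ifs
  · simp
  · simp


lemma Eblk_sum (w : ℕ) (π : ι → B) : ∑ a, Eblk w π a = ((w : ℂ)⁻¹) • (1 : Matrix ι ι ℂ) := by
  ext x y
  rw [Matrix.sum_apply]
  unfold Eblk
  by_cases h : x = y
  · subst h; simp
  · simp [h]

inductive IsWord (w : ℕ) (π : ι → B) (G : Bool → Matrix ι ι ℂ) : ℕ → Matrix ι ι ℂ → Prop
  | base (s : Bool) : IsWord w π G 0 (G s)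
  | step (s : Bool) (b : B) (N : ℕ) (A : Matrix ι ι ℂ) (h : IsWord w π G N A) :
      IsWord w π G (N + 1) (G s * Eblk w π b * A)

noncomputable def F (w : ℕ) (π : ι → B) (G : Bool → Matrix ι ι ℂ) (l : List (Bool × B)) :
    Matrix ι ι ℂ := (l.map fun q => G q.1 * Eblk w π q.2).prod

variable {w : ℕ} {π : ι → B} {G : Bool → Matrix ι ι ℂ}


lemma IsWord.append {N M : ℕ} {A C : Matrix ι ι ℂ} (hA : IsWord w π G N A)
    (hC : IsWord w π G M C) (b : B) : IsWord w π G (N + M + 1) (A * Eblk w π b * C) := by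
  induction hA with
  | base s =>
    rw [Nat.zero_add]
    exact IsWord.step s b M C hC
  | step s b' N A h ih =>
    have := IsWord.step s b' _ _ ih
    convert this using 1
    · omega
    · simp only [Matrix.mul_assoc]


lemma isWord_F (l : List (Bool × B)) (s : Bool) : IsWord w π G l.length (F w π G l * G s) := by
  induction l with
  | nil => simpa [F] using IsWord.base s
  | cons q l ih =>
    have := IsWord.step q.1 q.2 _ _ ih
    have e : F w π G (q :: l) * G s = G q.1 * Eblk w π q.2 * (F w π G l * G s) := by
      simp [F, Matrix.mul_assoc]
    rw [e]
    exact this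


lemma IsWord.exists_list {N : ℕ} {A : Matrix ι ι ℂ} (hA : IsWord w π G N A) (b : B) :
    ∃ l : List (Bool × B), l.length = N + 1 ∧ A * Eblk w π b = F w π G l := by
  induction hA with
  | base s => exact ⟨[(s, b)], rfl, by simp [F]⟩
  | step s b' N A h ih =>
    obtain ⟨l, hl, h2⟩ := ih
    refine ⟨(s, b') :: l, by simp [hl], ?_⟩
    rw [Matrix.mul_assoc, h2]
    simp [F]


lemma IsWord.adj (hG : ∀ s, (G s)ᴴ = G (!s)) {N : ℕ} {A : Matrix ι ι ℂ}
    (hA : IsWord w π G N A) : IsWord w π G N Aᴴ := by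
  induction hA with
  | base s => rw [hG]; exact IsWord.base _
  | step s b' N A h ih =>
    have := ih.append (IsWord.base (!s)) b'
    convert this using 1
    rw [Matrix.conjTranspose_mul, Matrix.conjTranspose_mul, hG, Eblk_adj, Matrix.mul_assoc]


lemma IsWord.ward {c : ℂ} (hG : ∀ s, (G s)ᴴ = G (!s))
    (hc : ∀ s, G (!s) * G s = c • (G true - G false)) {N : ℕ} {A : Matrix ι ι ℂ}
    (hA : IsWord w π G N A) : ∃ B1 B2, IsWord w π G (2 * N) B1 ∧ IsWord w π G (2 * N) B2 ∧
      Aᴴ * A = c • (B1 - B2) := by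
  cases hA with
  | base s => exact ⟨_, _, IsWord.base true, IsWord.base false, by rw [hG, hc]⟩
  | step s b N A h =>
    refine ⟨Aᴴ * Eblk w π b * (G true * Eblk w π b * A),
      Aᴴ * Eblk w π b * (G false * Eblk w π b * A), ?_, ?_, ?_⟩
    · convert (h.adj hG).append (IsWord.step true b _ _ h) b using 1
      omega
    · convert (h.adj hG).append (IsWord.step false b _ _ h) b using 1
      omega
    · rw [Matrix.conjTranspose_mul, Matrix.conjTranspose_mul, hG, Eblk_adj]
      have : Aᴴ * (Eblk w π b * G (!s)) * (G s * Eblk w π b * A)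
        = Aᴴ * Eblk w π b * (G (!s) * G s) * (Eblk w π b * A) := by
        simp only [Matrix.mul_assoc]
      rw [this, hc]
      simp only [Matrix.mul_smul, Matrix.smul_mul, Matrix.mul_sub, Matrix.sub_mul,
        Matrix.mul_assoc]

/-- sup of loops -/
noncomputable def supL (w : ℕ) (π : ι → B) (G : Bool → Matrix ι ι ℂ) (n : ℕ) : ℝ :=
  ⨆ σ : Fin n → Bool, ⨆ b : Fin n → B, ‖gLoop w π G n σ b‖

lemma supL_nonneg (n : ℕ) : 0 ≤ supL w π G n :=
  Real.iSup_nonneg fun _ => Real.iSup_nonneg fun _ => norm_nonneg _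


lemma gLoop_eq (n : ℕ) (σ : Fin n → Bool) (a : Fin n → B) :
    gLoop w π G n σ a = Matrix.trace (F w π G (List.ofFn fun i => (σ i, a i))) := by
  unfold gLoop F
  rw [List.ofFn_eq_map, List.map_map]
  rfl

lemma trace_F_le (l : List (Bool × B)) : ‖Matrix.trace (F w π G l)‖ ≤ supL w π G l.length := by
  have h : Matrix.trace (F w π G l) =
      gLoop w π G l.length (fun i => (l.get i).1) (fun i => (l.get i).2) := by
    rw [gLoop_eq]
    congr 2
    exact (List.ofFn_get l).symm
  rw [h]
  unfold supL
  refine le_trans ?_ (le_ciSup (f := fun σ : Fin l.length → Bool =>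
    ⨆ b : Fin l.length → B, ‖gLoop w π G l.length σ b‖) (Set.finite_range _).bddAbove
    (fun i => (l.get i).1))
  exact le_ciSup (f := fun b : Fin l.length → B =>
    ‖gLoop w π G l.length (fun i => (l.get i).1) b‖) (Set.finite_range _).bddAbove
    (fun i => (l.get i).2)

lemma IsWord.trace_le {N : ℕ} {A : Matrix ι ι ℂ} (hA : IsWord w π G N A) (b : B) :
    ‖Matrix.trace (A * Eblk w π b)‖ ≤ supL w π G (N + 1) := by
  obtain ⟨l, hl, h⟩ := hA.exists_list b
  rw [h, ← hl]
  exact trace_F_le l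

lemma IsWord.ward_trace {c : ℂ} {η : ℝ} (hη : ‖c‖ ≤ 1 / (2 * η)) (hG : ∀ s, (G s)ᴴ = G (!s))
    (hc : ∀ s, G (!s) * G s = c • (G true - G false)) {N : ℕ} {A : Matrix ι ι ℂ}
    (hA : IsWord w π G N A) (b : B) :
    ‖Matrix.trace (Aᴴ * A * Eblk w π b)‖ ≤ supL w π G (2 * N + 1) / η := by
  obtain ⟨B1, B2, h1, h2, h⟩ := hA.ward hG hc
  rw [h, Matrix.smul_mul, Matrix.trace_smul, Matrix.sub_mul, Matrix.trace_sub, norm_smul]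
  have := (norm_sub_le (trace (B1 * Eblk w π b)) (trace (B2 * Eblk w π b))).trans
    (add_le_add (h1.trace_le b) (h2.trace_le b))
  calc _ ≤ (1 / (2 * η)) * (supL w π G (2 * N + 1) + supL w π G (2 * N + 1)) :=
        mul_le_mul hη this (norm_nonneg _) ((norm_nonneg _).trans hη)
    _ = _ := by ring

/-- Hilbert-Schmidt norm squared -/
noncomputable def hs (A : Matrix ι ι ℂ) : ℝ := ∑ q : ι × ι, ‖A q.1 q.2‖ ^ 2


lemma hs_nonneg (A : Matrix ι ι ℂ) : 0 ≤ hs A := Finset.sum_nonneg fun _ _ => by positivity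


lemma hs_eq (A : Matrix ι ι ℂ) : ((hs A : ℝ) : ℂ) = trace (Aᴴ * A) := by
  unfold hs
  rw [Fintype.sum_prod_type, Finset.sum_comm]
  simp only [Matrix.trace, Matrix.diag, Matrix.mul_apply, Matrix.conjTranspose_apply]
  push_cast
  refine Finset.sum_congr rfl fun i _ => Finset.sum_congr rfl fun j _ => ?_
  rw [← Complex.conj_mul']
  rfl


lemma trace_mul_le (A C : Matrix ι ι ℂ) : ‖trace (A * C)‖ ≤ √(hs A) * √(hs C) := by
  have h1 : trace (A * C) = ∑ q : ι × ι, A q.1 q.2 * C q.2 q.1 := by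
    rw [Fintype.sum_prod_type]
    simp [Matrix.trace, Matrix.mul_apply]
  have h2 : hs C = ∑ q : ι × ι, ‖C q.2 q.1‖ ^ 2 := by
    unfold hs
    rw [Fintype.sum_prod_type, Fintype.sum_prod_type, Finset.sum_comm]
  rw [h1, h2]
  unfold hs
  refine (norm_sum_le _ _).trans ?_
  simp only [norm_mul]
  exact Real.sum_mul_le_sqrt_mul_sqrt _ _ _

lemma trace_pow_eq {M : Matrix ι ι ℂ} (hM : M.IsHermitian) (p : ℕ) :
    trace (M ^ p) = ((∑ i, hM.eigenvalues i ^ p : ℝ) : ℂ) := by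
  have h := hM.spectral_theorem
  rw [Unitary.conjStarAlgAut_apply] at h
  conv_lhs => rw [h]
  set U := hM.eigenvectorUnitary
  have hp : ∀ D : Matrix ι ι ℂ, ((U : Matrix ι ι ℂ) * D * star (U : Matrix ι ι ℂ)) ^ p
      = (U : Matrix ι ι ℂ) * D ^ p * star (U : Matrix ι ι ℂ) := by
    intro D
    induction p with
    | zero => simp
    | succ q ih =>
      rw [pow_succ, ih, pow_succ]
      have : star (U : Matrix ι ι ℂ) * (U : Matrix ι ι ℂ) = 1 := Unitary.coe_star_mul_self U
      calc _ = (U : Matrix ι ι ℂ) * D ^ q * (star (U : Matrix ι ι ℂ) * (U : Matrix ι ι ℂ)) * D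
            * star (U : Matrix ι ι ℂ) := by simp only [Matrix.mul_assoc]
        _ = _ := by rw [this]; simp only [Matrix.mul_assoc, Matrix.mul_one, Matrix.one_mul]
  rw [hp, Matrix.trace_mul_comm, ← Matrix.mul_assoc, Unitary.coe_star_mul_self, Matrix.one_mul,
    Matrix.diagonal_pow, Matrix.trace_diagonal]
  simp

lemma psd_le {M : Matrix ι ι ℂ} (hM : M.PosSemidef) {t : ℝ} (ht : ∀ i, hM.1.eigenvalues i ≤ t) :
    ((t : ℂ) • (1 : Matrix ι ι ℂ) - M).PosSemidef := by
  have h := hM.1.spectral_theorem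
  rw [Unitary.conjStarAlgAut_apply] at h
  set U := hM.1.eigenvectorUnitary
  have h1 : (t : ℂ) • (1 : Matrix ι ι ℂ) - M = (U : Matrix ι ι ℂ) *
      (Matrix.diagonal fun i => ((t - hM.1.eigenvalues i : ℝ) : ℂ)) * (U : Matrix ι ι ℂ)ᴴ := by
    have h2 : (Matrix.diagonal fun i => ((t - hM.1.eigenvalues i : ℝ) : ℂ)) =
      (t : ℂ) • (1 : Matrix ι ι ℂ) - diagonal (RCLike.ofReal ∘ hM.1.eigenvalues) := by
      rw [← Matrix.diagonal_one, ← Matrix.diagonal_smul, Matrix.diagonal_sub]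
      congr 1
      funext i
      simp
    have h3 : (U : Matrix ι ι ℂ) * (U : Matrix ι ι ℂ)ᴴ = 1 := Unitary.coe_mul_star_self U
    rw [h2, Matrix.mul_sub, Matrix.sub_mul]
    simp only [Matrix.mul_smul, Matrix.smul_mul, Matrix.mul_one]
    rw [h3]
    congr 1
  rw [h1]
  refine Matrix.PosSemidef.mul_mul_conjTranspose_same ?_ _
  rw [Matrix.posSemidef_diagonal_iff]
  intro i
  rw [Complex.zero_le_real]
  linarith [ht i]

lemma hs_mul_le (Y C : Matrix ι ι ℂ) (p : ℕ) (hp : 1 ≤ p) {m : ℝ}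
    (hm : ‖trace ((Yᴴ * Y) ^ p)‖ ≤ m) : hs (Y * C) ≤ m ^ (1 / (p : ℝ)) * hs C := by
  have hM : (Yᴴ * Y).PosSemidef := Matrix.posSemidef_conjTranspose_mul_self Y
  have hm0 : 0 ≤ m := (norm_nonneg _).trans hm
  have hp0 : (p : ℝ) ≠ 0 := by positivity
  have ht : ∀ i, hM.1.eigenvalues i ≤ m ^ (1 / (p : ℝ)) := by
    intro i
    have h0 : ∀ i, 0 ≤ hM.1.eigenvalues i := hM.eigenvalues_nonneg
    rw [trace_pow_eq hM.1, Complex.norm_real] at hm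
    have h1 : hM.1.eigenvalues i ^ p ≤ m := by
      refine le_trans ?_ ((le_abs_self _).trans hm)
      exact Finset.single_le_sum (f := fun i => hM.1.eigenvalues i ^ p)
        (fun i _ => pow_nonneg (h0 i) p) (Finset.mem_univ i)
    calc hM.1.eigenvalues i = (hM.1.eigenvalues i ^ p) ^ (1 / (p : ℝ)) := by
          rw [← Real.rpow_natCast, ← Real.rpow_mul (h0 i), mul_one_div_cancel hp0, Real.rpow_one]
      _ ≤ _ := Real.rpow_le_rpow (pow_nonneg (h0 i) p) h1 (by positivity)
  have h := (psd_le hM ht).conjTranspose_mul_mul_same C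
  have h2 := h.trace_nonneg
  have h3 : Cᴴ * (((m ^ (1 / (p : ℝ)) : ℝ) : ℂ) • (1 : Matrix ι ι ℂ) - Yᴴ * Y) * C =
      ((m ^ (1 / (p : ℝ)) : ℝ) : ℂ) • (Cᴴ * C) - (Y * C)ᴴ * (Y * C) := by
    rw [Matrix.conjTranspose_mul]
    simp only [Matrix.mul_sub, Matrix.sub_mul, Matrix.mul_smul, Matrix.smul_mul, Matrix.mul_one,
      Matrix.mul_assoc]
  rw [h3, Matrix.trace_sub, Matrix.trace_smul, ← hs_eq, ← hs_eq, smul_eq_mul,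
    ← Complex.ofReal_mul, ← Complex.ofReal_sub, Complex.zero_le_real] at h2
  linarith

lemma IsWord.hs_left {c : ℂ} {η : ℝ} (hη : ‖c‖ ≤ 1 / (2 * η)) (hG : ∀ s, (G s)ᴴ = G (!s))
    (hc : ∀ s, G (!s) * G s = c • (G true - G false)) {N : ℕ} {A : Matrix ι ι ℂ}
    (hA : IsWord w π G N A) (b : B) :
    ∑ a, hs (Qb w π a * A * Qb w π b) ≤ supL w π G (2 * N + 1) / (w * η) := by
  have h1 : ((∑ a, hs (Qb w π a * A * Qb w π b) : ℝ) : ℂ) =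
      (w : ℂ)⁻¹ * trace (Aᴴ * A * Eblk w π b) := by
    push_cast
    have : ∀ a, ((hs (Qb w π a * A * Qb w π b) : ℝ) : ℂ) =
        trace (Aᴴ * Eblk w π a * A * Eblk w π b) := by
      intro a
      rw [hs_eq, Matrix.conjTranspose_mul, Matrix.conjTranspose_mul, Qb_adj, Qb_adj,
        Matrix.mul_assoc, Matrix.trace_mul_comm, ← Qb_mul, ← Qb_mul]
      simp only [Matrix.mul_assoc]
    simp only [this]
    rw [← Matrix.trace_sum, ← Finset.sum_mul, ← Finset.sum_mul, ← Finset.mul_sum, Eblk_sum]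
    simp
  have h2 := hA.ward_trace hη hG hc b
  calc (∑ a, hs (Qb w π a * A * Qb w π b))
      = ‖((∑ a, hs (Qb w π a * A * Qb w π b) : ℝ) : ℂ)‖ := by
        rw [Complex.norm_real, Real.norm_of_nonneg (Finset.sum_nonneg fun _ _ => hs_nonneg _)]
    _ ≤ (w : ℝ)⁻¹ * (supL w π G (2 * N + 1) / η) := by
        rw [h1, norm_mul, norm_inv, Complex.norm_natCast]
        gcongr
    _ = _ := by rw [div_mul_eq_div_div_swap, inv_mul_eq_div]


lemma hs_adj (A : Matrix ι ι ℂ) : hs Aᴴ = hs A := by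
  have : ((hs Aᴴ : ℝ) : ℂ) = (hs A : ℝ) := by
    rw [hs_eq, hs_eq, Matrix.trace_mul_comm, Matrix.conjTranspose_conjTranspose]
  exact_mod_cast this

lemma IsWord.hs_right {c : ℂ} {η : ℝ} (hη : ‖c‖ ≤ 1 / (2 * η)) (hG : ∀ s, (G s)ᴴ = G (!s))
    (hc : ∀ s, G (!s) * G s = c • (G true - G false)) {N : ℕ} {A : Matrix ι ι ℂ}
    (hA : IsWord w π G N A) (b : B) :
    ∑ a, hs (Qb w π b * A * Qb w π a) ≤ supL w π G (2 * N + 1) / (w * η) := by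
  refine le_trans (le_of_eq (Finset.sum_congr rfl fun a _ => ?_))
    ((hA.adj hG).hs_left hη hG hc b)
  rw [← hs_adj, Matrix.conjTranspose_mul, Matrix.conjTranspose_mul, Qb_adj, Qb_adj,
    Matrix.mul_assoc]


lemma IsWord.pow {N : ℕ} {D : Matrix ι ι ℂ} (hD : IsWord w π G N D) (b : B) (q : ℕ) :
    ∃ D', IsWord w π G ((N + 1) * (q + 1) - 1) D' ∧
      (Qb w π b * D * Qb w π b) ^ (q + 1) = Qb w π b * D' * Qb w π b := by
  induction q with
  | zero => exact ⟨D, by simpa using hD, by simp⟩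
  | succ q ih =>
    obtain ⟨D', h1, h2⟩ := ih
    refine ⟨D' * Eblk w π b * D, ?_, ?_⟩
    · convert h1.append hD b using 1
      have : 1 ≤ (N + 1) * (q + 1) := Nat.mul_pos (by omega) (by omega)
      rw [Nat.mul_succ]
      omega
    · rw [pow_succ, h2, ← Qb_mul]
      simp only [Matrix.mul_assoc]

lemma IsWord.hs_mid (hG : ∀ s, (G s)ᴴ = G (!s)) {N : ℕ} {A : Matrix ι ι ℂ}
    (hA : IsWord w π G N A) (b b' : B) (p : ℕ) (hp : 1 ≤ p) (C : Matrix ι ι ℂ) :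
    hs (Qb w π b * A * Qb w π b' * C) ≤
      supL w π G (2 * (N + 1) * p) ^ (1 / (p : ℝ)) * hs C := by
  refine hs_mul_le _ _ p hp ?_
  obtain ⟨q, rfl⟩ : ∃ q, p = q + 1 := ⟨p - 1, by omega⟩
  have e : (Qb w π b * A * Qb w π b')ᴴ * (Qb w π b * A * Qb w π b') =
      Qb w π b' * (Aᴴ * Eblk w π b * A) * Qb w π b' := by
    rw [Matrix.conjTranspose_mul, Matrix.conjTranspose_mul, Qb_adj, Qb_adj, ← Qb_mul]
    simp only [Matrix.mul_assoc]
  obtain ⟨D', h1, h2⟩ := ((hA.adj hG).append hA b).pow b' q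
  rw [e, h2, Matrix.mul_assoc, Matrix.trace_mul_comm, Matrix.mul_assoc, Qb_mul]
  convert h1.trace_le b' using 2
  have h3 : 1 ≤ (N + N + 1 + 1) * (q + 1) := Nat.mul_pos (by omega) (by omega)
  rw [Nat.sub_add_cancel h3]
  ring

lemma core {c : ℂ} {η : ℝ} (hη0 : 0 < η) (hw : 0 < w)
    (hη : ‖c‖ ≤ 1 / (2 * η)) (hG : ∀ s, (G s)ᴴ = G (!s))
    (hc : ∀ s, G (!s) * G s = c • (G true - G false)) {N1 N2 N3 : ℕ} {A1 A3 : Matrix ι ι ℂ}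
    (A2 : B → B → Matrix ι ι ℂ)
    (h1 : IsWord w π G N1 A1) (h2 : ∀ x y, IsWord w π G N2 (A2 x y)) (h3 : IsWord w π G N3 A3)
    (b b' : B) (p : ℕ) (hp : 1 ≤ p) (K : ℕ) (S : B → Finset B) (hS : ∀ x, (S x).card ≤ K) :
    ∑ x, ∑ y ∈ S x, ‖trace (A1 * Eblk w π b * (A2 x y * Eblk w π b') * (A3 * Eblk w π x))‖ ≤
      1 * K / (w * η) * √(supL w π G (2 * N1 + 1) * supL w π G (2 * N3 + 1)) *
        supL w π G (2 * (N2 + 1) * p) ^ (1 / (2 * (p : ℝ))) := by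
  set R := supL w π G (2 * (N2 + 1) * p) with hR
  have hR0 : 0 ≤ R := supL_nonneg _
  have hsR : √(R ^ (1 / (p : ℝ))) = R ^ (1 / (2 * (p : ℝ))) := by
    rw [Real.sqrt_eq_rpow, ← Real.rpow_mul hR0]
    congr 1
    rw [one_div_mul_one_div, mul_comm]
  set f : B → ℝ := fun x => √(hs (Qb w π x * A1 * Qb w π b)) with hf
  set g : B → ℝ := fun x => √(hs (Qb w π b' * A3 * Qb w π x)) with hg
  have key : ∀ x y, ‖trace (A1 * Eblk w π b * (A2 x y * Eblk w π b') * (A3 * Eblk w π x))‖ ≤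
      R ^ (1 / (2 * (p : ℝ))) * (f x * g x) := by
    intro x y
    have e : trace (A1 * Eblk w π b * (A2 x y * Eblk w π b') * (A3 * Eblk w π x)) =
        trace ((Qb w π x * A1 * Qb w π b) *
          (Qb w π b * A2 x y * Qb w π b' * (Qb w π b' * A3 * Qb w π x))) := by
      simp only [Matrix.mul_assoc]
      rw [Matrix.trace_mul_comm (Qb w π x)]
      simp only [← Qb_mul, Matrix.mul_assoc]
    rw [e]
    refine (trace_mul_le _ _).trans ?_
    have h := Real.sqrt_le_sqrt ((h2 x y).hs_mid hG b b' p hp (Qb w π b' * A3 * Qb w π x))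
    rw [Real.sqrt_mul (Real.rpow_nonneg (supL_nonneg _) _), hsR] at h
    calc _ ≤ f x * (R ^ (1 / (2 * (p : ℝ))) * g x) := by
          exact mul_le_mul_of_nonneg_left h (Real.sqrt_nonneg _)
      _ = _ := by ring
  have hRp : 0 ≤ R ^ (1 / (2 * (p : ℝ))) := Real.rpow_nonneg hR0 _
  have hfg : ∀ x, 0 ≤ f x * g x := fun x => mul_nonneg (Real.sqrt_nonneg _) (Real.sqrt_nonneg _)
  have hF := h1.hs_left hη hG hc b
  have hH := h3.hs_right hη hG hc b'
  have hwη : 0 < (w : ℝ) * η := by positivity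
  calc _ ≤ ∑ x, (K : ℝ) * (R ^ (1 / (2 * (p : ℝ))) * (f x * g x)) := by
        refine Finset.sum_le_sum fun x _ => ?_
        refine (Finset.sum_le_card_nsmul _ _ _ fun y _ => key x y).trans ?_
        rw [nsmul_eq_mul]
        exact mul_le_mul_of_nonneg_right (by exact_mod_cast hS x) (mul_nonneg hRp (hfg x))
    _ = K * R ^ (1 / (2 * (p : ℝ))) * ∑ x, f x * g x := by
        rw [Finset.mul_sum]; exact Finset.sum_congr rfl fun x _ => by ring
    _ ≤ K * R ^ (1 / (2 * (p : ℝ))) *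
        (√(supL w π G (2 * N1 + 1) / (w * η)) * √(supL w π G (2 * N3 + 1) / (w * η))) := by
        gcongr
        refine (Real.sum_mul_le_sqrt_mul_sqrt _ _ _).trans ?_
        have e1 : ∀ x, f x ^ 2 = hs (Qb w π x * A1 * Qb w π b) :=
          fun x => Real.sq_sqrt (hs_nonneg _)
        have e2 : ∀ x, g x ^ 2 = hs (Qb w π b' * A3 * Qb w π x) :=
          fun x => Real.sq_sqrt (hs_nonneg _)
        simp only [e1, e2]
        exact mul_le_mul (Real.sqrt_le_sqrt hF) (Real.sqrt_le_sqrt hH) (Real.sqrt_nonneg _)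
          (Real.sqrt_nonneg _)
    _ = _ := by
        rw [Real.sqrt_div (supL_nonneg _), Real.sqrt_div (supL_nonneg _),
          div_mul_div_comm, Real.mul_self_sqrt hwη.le, Real.sqrt_mul (supL_nonneg _)]
        ring

end general

section res
variable {ι : Type} [Fintype ι] [DecidableEq ι]

lemma det_unit {H : Matrix ι ι ℂ} (hH : H.IsHermitian) {z : ℂ} (hz : z.im ≠ 0) :
    IsUnit (H - z • (1 : Matrix ι ι ℂ)).det := by
  rw [isUnit_iff_ne_zero]
  intro h0
  obtain ⟨v, hv, h⟩ := Matrix.exists_mulVec_eq_zero_iff.mpr h0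
  rw [Matrix.sub_mulVec, Matrix.smul_mulVec, Matrix.one_mulVec, sub_eq_zero] at h
  have h1 := hH.im_star_dotProduct_mulVec_self v
  rw [h, dotProduct_smul] at h1
  have h2 : 0 < star v ⬝ᵥ v := Matrix.dotProduct_star_self_pos_iff.mpr hv
  rw [Complex.lt_def] at h2
  simp only [smul_eq_mul, RCLike.im_to_complex, Complex.mul_im] at h1
  rw [← h2.2] at h1
  simp at h1
  rcases h1 with h1 | h1
  · exact hz h1
  · have := h2.1
    simp [h1] at this

lemma resolv_adj {H : Matrix ι ι ℂ} (hH : H.IsHermitian) (z : ℂ) (s : Bool) :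
    (resolv H z s)ᴴ = resolv H z (!s) := by
  cases s <;> simp [resolv, Matrix.conjTranspose_nonsing_inv, hH.eq]

lemma resolv_ward {H : Matrix ι ι ℂ} (hH : H.IsHermitian) {z : ℂ} (hz : 0 < z.im) (s : Bool) :
    resolv H z (!s) * resolv H z s =
      (1 / (2 * Complex.I * z.im)) • (resolv H z true - resolv H z false) := by
  set A := H - z • (1 : Matrix ι ι ℂ) with hA
  set C := H - (starRingEnd ℂ) z • (1 : Matrix ι ι ℂ) with hC
  have uA : IsUnit A.det := det_unit hH hz.ne'
  have uC : IsUnit C.det := det_unit hH (by simpa using hz.ne')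
  have hd : (2 * Complex.I * z.im : ℂ) ≠ 0 := by
    simp [hz.ne']
  have e : C - A = (2 * Complex.I * z.im : ℂ) • (1 : Matrix ι ι ℂ) := by
    have : (2 * Complex.I * z.im : ℂ) = z - (starRingEnd ℂ) z := by
      rw [Complex.sub_conj]; push_cast; ring
    rw [hA, hC, this, sub_smul]; abel
  have e1 : A⁻¹ - C⁻¹ = (2 * Complex.I * z.im : ℂ) • (A⁻¹ * C⁻¹) := by
    calc A⁻¹ - C⁻¹ = A⁻¹ * (C - A) * C⁻¹ := by
          rw [Matrix.mul_sub, Matrix.sub_mul, Matrix.nonsing_inv_mul _ uA, Matrix.one_mul,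
            Matrix.mul_assoc, Matrix.mul_nonsing_inv _ uC, Matrix.mul_one]
      _ = _ := by rw [e]; simp
  have e2 : A⁻¹ - C⁻¹ = (2 * Complex.I * z.im : ℂ) • (C⁻¹ * A⁻¹) := by
    calc A⁻¹ - C⁻¹ = C⁻¹ * (C - A) * A⁻¹ := by
          rw [Matrix.mul_sub, Matrix.sub_mul, Matrix.nonsing_inv_mul _ uC, Matrix.one_mul,
            Matrix.mul_assoc, Matrix.mul_nonsing_inv _ uA, Matrix.mul_one]
      _ = _ := by rw [e]; simp
  have e3 : resolv H z true - resolv H z false = A⁻¹ - C⁻¹ := by simp [resolv, hA, hC]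
  rw [e3]
  cases s
  · rw [e1, smul_smul, one_div_mul_cancel hd, one_smul]
    simp [resolv, hA, hC]
  · rw [e2, smul_smul, one_div_mul_cancel hd, one_smul]
    simp [resolv, hA, hC]

end res

end GW

/-- **Generalized Ward's inequality for G-loops (Lemma 5.1, inequality (5.3)).**
For `n = m+4 ≥ 4` and integer `p ≥ 1` there is `C_{n,p} > 0`, depending only on `n` and `p`,
such that for all `1 ≤ k < j < l ≤ n−1`, every `K ∈ ℕ`, every map `𝒮` assigning to each
`a_n` a set of at most `K` blocks, and every choice of the remaining loop indices:
`max_σ Σ_{a_n} Σ_{a_j∈𝒮(a_n)} |L^{(n)}_{σ,a}| ≤ (C_{n,p}·K/(W^d η)) ·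
  (max|L^{(2k−1)}| · max|L^{(2n−2l−1)}|)^{1/2} · (max|L^{(2(l−k)p)}|)^{1/(2p)}`. -/
theorem generalized_ward_inequality_loops (m p : ℕ) (hp : 1 ≤ p) :
    ∃ C : ℝ, 0 < C ∧
      ∀ (k j l : ℕ) (hk : 1 ≤ k) (hkj : k < j) (hjl : j < l) (hl : l ≤ m + 3),
        ∀ (K : ℕ) (W L d : ℕ) [NeZero L], 2 ≤ W → 2 ≤ L → 1 ≤ d →
          ∀ (ι : Type) [Fintype ι] [DecidableEq ι], Fintype.card ι = (W * L) ^ d →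
            ∀ π : ι → (Fin d → ZMod L),
              (∀ a, (Finset.univ.filter fun x => π x = a).card = W ^ d) →
              ∀ H : Matrix ι ι ℂ, H.IsHermitian →
                ∀ z : ℂ, 0 < z.im →
                  ∀ S : (Fin d → ZMod L) → Finset (Fin d → ZMod L),
                    (∀ an, (S an).card ≤ K) →
                    ∀ (a : Fin (m + 4) → (Fin d → ZMod L)) (σ : Fin (m + 4) → Bool),
                      (∑ an : Fin d → ZMod L, ∑ aj ∈ S an,
                          ‖gLoop (W ^ d) π (resolv H z) (m + 4) σ
                            (Function.update
                              (Function.update a ⟨j - 1, by omega⟩ aj)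
                              (Fin.last (m + 3)) an)‖) ≤
                        C * K / ((W : ℝ) ^ d * z.im) *
                          Real.sqrt
                            ((⨆ σ' : Fin (2 * k - 1) → Bool,
                                ⨆ b : Fin (2 * k - 1) → (Fin d → ZMod L),
                                  ‖gLoop (W ^ d) π (resolv H z) (2 * k - 1) σ' b‖) *
                              (⨆ σ'' : Fin (2 * (m + 4) - 2 * l - 1) → Bool,
                                ⨆ b' : Fin (2 * (m + 4) - 2 * l - 1) → (Fin d → ZMod L),
                                  ‖gLoop (W ^ d) π (resolv H z)
                                    (2 * (m + 4) - 2 * l - 1) σ'' b'‖)) *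
                          (⨆ σ''' : Fin (2 * (l - k) * p) → Bool,
                            ⨆ b'' : Fin (2 * (l - k) * p) → (Fin d → ZMod L),
                              ‖gLoop (W ^ d) π (resolv H z) (2 * (l - k) * p) σ''' b''‖) ^
                            (1 / (2 * (p : ℝ))) := by
  refine ⟨1, one_pos, ?_⟩
  intro k j l hk hkj hjl hl K W L d _ hW hL hd ι _ _ hcard π hπ H hH z hz S hS a σ
  have hη : ‖(1 / (2 * Complex.I * z.im) : ℂ)‖ ≤ 1 / (2 * z.im) := by
    simp [abs_of_pos hz]
  -- the pieces
  let q : Fin (m + 4) → Bool × (Fin d → ZMod L) := fun i => (σ i, a i)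
  let full : (Fin d → ZMod L) → (Fin d → ZMod L) → List (Bool × (Fin d → ZMod L)) :=
    fun x y => List.ofFn fun i : Fin (m + 4) => (σ i, (Function.update
      (Function.update a ⟨j - 1, by omega⟩ y) (Fin.last (m + 3)) x) i)
  have hlen : ∀ x y, (full x y).length = m + 4 := fun x y => by simp [full]
  let l1 := (List.ofFn q).take (k - 1)
  let l2 : (Fin d → ZMod L) → (Fin d → ZMod L) → List (Bool × (Fin d → ZMod L)) :=
    fun x y => ((full x y).drop k).take (l - k - 1)
  let l3 := ((List.ofFn q).drop l).take (m + 3 - l)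
  let q1 : Fin (m + 4) := ⟨k - 1, by omega⟩
  let q2 : Fin (m + 4) := ⟨l - 1, by omega⟩
  have hl1 : l1.length = k - 1 := by simp [l1]; omega
  have hl2 : ∀ x y, (l2 x y).length = l - k - 1 := fun x y => by simp [l2, hlen]; omega
  have hl3 : l3.length = m + 3 - l := by simp [l3]; omega
  have hfull : ∀ x y, full x y = (l1 ++ [(σ q1, a q1)]) ++ (l2 x y ++ [(σ q2, a q2)]) ++
      (l3 ++ [(σ (Fin.last (m + 3)), x)]) := by
    intro x y
    apply List.ext_getElem
    · simp [hl1, hl2, hl3, hlen]; omega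
    · intro i hi1 hi2
      have hi : i < m + 4 := by rw [hlen] at hi1; exact hi1
      simp only [List.getElem_append, List.length_append, hl1, hl2, hl3, List.length_cons,
        List.length_nil, List.getElem_singleton]
      have hne : ∀ (h : i < m + 4), i ≠ j - 1 → i ≠ m + 3 → (full x y)[i]'hi1 = q ⟨i, h⟩ := by
        intro h h1 h2
        simp only [full, List.getElem_ofFn, q]
        rw [Function.update_of_ne (by simp [Fin.ext_iff, h2]),
          Function.update_of_ne (by simp [Fin.ext_iff, h1])]
      split_ifs with c1 c2 c3 c4 c5
      · rw [hne hi (by omega) (by omega)]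
        simp only [l1, List.getElem_take, List.getElem_ofFn]
      · rw [hne hi (by omega) (by omega)]
        have : i = k - 1 := by omega
        subst this; rfl
      · simp only [l2, List.getElem_take, List.getElem_drop]
        congr 1
        omega
      · rw [hne hi (by omega) (by omega)]
        have : i = l - 1 := by omega
        subst this; rfl
      · rw [hne hi (by omega) (by omega)]
        simp only [l3, List.getElem_take, List.getElem_drop, List.getElem_ofFn]
        congr 1
        apply Fin.ext
        simp only
        omega
      · have : i = m + 3 := by omega
        subst this
        simp only [full, List.getElem_ofFn]
        have e : (⟨m + 3, hi⟩ : Fin (m + 4)) = Fin.last (m + 3) := rfl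
        rw [e, Function.update_self]
  have hw : 0 < W ^ d := Nat.pow_pos (by omega)
  have main := GW.core (w := W ^ d) (π := π) (G := resolv H z) hz hw hη (GW.resolv_adj hH z)
    (GW.resolv_ward hH hz)
    (fun x y => GW.F (W ^ d) π (resolv H z) (l2 x y) * resolv H z (σ q2))
    (GW.isWord_F l1 (σ q1)) (N2 := l - k - 1)
    (fun x y => by rw [← hl2 x y]; exact GW.isWord_F (l2 x y) (σ q2))
    (GW.isWord_F l3 (σ (Fin.last (m + 3)))) (a q1) (a q2) p hp K S hS
  have n1 : 2 * l1.length + 1 = 2 * k - 1 := by omega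
  have n2 : l - k - 1 + 1 = l - k := by omega
  have n3 : 2 * l3.length + 1 = 2 * (m + 4) - 2 * l - 1 := by omega
  rw [n1, n2, n3] at main
  have hcast : ((W ^ d : ℕ) : ℝ) = (W : ℝ) ^ d := by push_cast; rfl
  rw [hcast] at main
  refine le_trans (le_of_eq ?_) main
  refine Finset.sum_congr rfl fun x _ => Finset.sum_congr rfl fun y _ => ?_
  rw [GW.gLoop_eq]
  have := hfull x y
  simp only [full] at this
  rw [this]
  simp [GW.F, Matrix.mul_assoc]
end

section
/- Evolution kernel estimate with zero modes removed (Lemma A.2): Fix integers n ≥ 2 and d ≥ 3 and a constant κ ∈ (0,1). Let L ≥ 2 be an integer, let E ∈ ℝ with |E| ≤ 2 − κ and m = m(E), let σ = (σ_1,…,σ_n) ∈ {+,−}^n, and let s, t satisfy 1 − L^{-2} ≤ s ≤ t < 1. For i ∈ {1,…,n}, define the partial-averaging operator on tensors 𝒜 : (ℤ_L^d)^n → ℂ by (P^(i) ∘ 𝒜)_{(a_1,…,a_n)} := L^{-d}·Σ_{b∈ℤ_L^d} 𝒜_{(a_1,…,a_{i−1},b,a_{i+1},…,a_n)}, set Q^(i)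 := Id − P^(i), and for J ⊆ {1,…,n} set Q^(J) := ∏_{i∈J} Q^(i) (these operators commute); let I_diff(σ) := {i ∈ {1,…,n} : σ_i ≠ σ_{i+1}} (cyclic convention σ_{n+1} = σ_1). Then for every subset J with I_diff(σ) ⊆ J ⊆ {1,…,n} and every constant τ > 0, there exists a constant C > 0, depending only on n, d, C₀, κ and τ, such that for every tensor 𝒜 : (ℤ_L^d)^n → ℂ: ‖Q^(J) ∘ U^{(n)}_{s,t,σ} ∘ 𝒜‖_∞ ≤ C · L^τ · ‖𝒜‖_∞. -/
/-- The block-level variance matrix `S^(B)` on `ℤ_L^d`, with coupling constant `λ`: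
`S^(B)_{ab} = (1+2dλ²)⁻¹ 1_{a=b} + λ²(1+2dλ²)⁻¹ 1_{a∼b}`. -/
noncomputable def SBmat (d L : ℕ) [NeZero L] (lam : ℝ) :
    Matrix (Fin d → ZMod L) (Fin d → ZMod L) ℂ :=
  Matrix.of fun a b =>
    if a = b then ((1 / (1 + 2 * d * lam ^ 2) : ℝ) : ℂ)
    else if torusDist a b = 1 then ((lam ^ 2 / (1 + 2 * d * lam ^ 2) : ℝ) : ℂ)
    else 0

/-- The Stieltjes transform of the semicircle law at a real energy `E` with `|E| ≤ 2`:
`m(E) := (−E + i√(4−E²))/2`, so that `|m(E)| = 1`. -/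
noncomputable def mSC (E : ℝ) : ℂ :=
  (-(E : ℂ) + Complex.I * ((Real.sqrt (4 - E ^ 2) : ℝ) : ℂ)) / 2

/-- `m(+) := m(E)` and `m(−) := conj (m(E))`, with `+` encoded by `true`. -/
noncomputable def mSign (E : ℝ) : Bool → ℂ :=
  fun b => if b then mSC E else (starRingEnd ℂ) (mSC E)

/-- The evolution kernel `U^{(n)}_{s,t,σ}` acting on tensors `𝒜 : (ℤ_L^d)^n → ℂ`:
`(U^{(n)}_{s,t,σ} ∘ 𝒜)_a = Σ_b Π_i [(I − s·m(σ_i)m(σ_{i+1})S^(B))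
(I − t·m(σ_i)m(σ_{i+1})S^(B))⁻¹]_{a_i b_i} · 𝒜_b`, with cyclic convention `σ_{n+1} = σ_1`. -/
noncomputable def Ukernel (d L : ℕ) [NeZero L] (lam : ℝ) (E s t : ℝ)
    (n : ℕ) [NeZero n] (σ : Fin n → Bool)
    (A : (Fin n → Fin d → ZMod L) → ℂ) : (Fin n → Fin d → ZMod L) → ℂ :=
  fun a => ∑ b : Fin n → Fin d → ZMod L,
    (∏ i : Fin n,
      (((1 : Matrix (Fin d → ZMod L) (Fin d → ZMod L) ℂ) -
            ((s : ℂ) * mSign E (σ i) * mSign E (σ (i + 1))) • SBmat d L lam) *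
          ((1 : Matrix (Fin d → ZMod L) (Fin d → ZMod L) ℂ) -
            ((t : ℂ) * mSign E (σ i) * mSign E (σ (i + 1))) • SBmat d L lam)⁻¹)
        (a i) (b i)) * A b

/-- The partial-averaging operator `P^(i)` over the `i`-th loop index. -/
noncomputable def Pavg (d L : ℕ) [NeZero L] (n : ℕ) (i : Fin n)
    (A : (Fin n → Fin d → ZMod L) → ℂ) : (Fin n → Fin d → ZMod L) → ℂ :=
  fun a => ((L : ℂ) ^ d)⁻¹ * ∑ b : Fin d → ZMod L, A (Function.update a i b)

/-- The zero-mode-removing operator `Q^(i) := Id − P^(i)`. -/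
noncomputable def Qrem (d L : ℕ) [NeZero L] (n : ℕ) (i : Fin n)
    (A : (Fin n → Fin d → ZMod L) → ℂ) : (Fin n → Fin d → ZMod L) → ℂ :=
  fun a => A a - Pavg d L n i A a

/-- `Q^(J) := Π_{i∈J} Q^(i)` (the operators `Q^(i)` commute with one another). -/
noncomputable def QremSet (d L : ℕ) [NeZero L] (n : ℕ) (J : Finset (Fin n))
    (A : (Fin n → Fin d → ZMod L) → ℂ) : (Fin n → Fin d → ZMod L) → ℂ :=
  (J.sort (· ≤ ·)).foldr (fun i acc => Qrem d L n i acc) A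


noncomputable section EKsec
open Finset

open scoped Matrix.Norms.Operator

namespace EK

lemma dist_zero_single {d L : ℕ} [NeZero L] (hL : 2 ≤ L) (j : Fin d) :
    torusDist (0 : Fin d → ZMod L) (Pi.single j 1) = 1 := by
  have : Fact (1 < L) := ⟨hL⟩
  unfold torusDist
  rw [Finset.sum_eq_single j]
  · simp only [Pi.single_eq_same, Pi.zero_apply, zero_sub, sub_zero]
    rw [ZMod.val_one]
    have : (-1 : ZMod L).val ≠ 0 := by
      rw [Ne, ZMod.val_eq_zero]; simp
    omega
  · intro b _ hb; simp [Pi.single_eq_of_ne hb]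
  · simp

lemma dist_eq_one {d L : ℕ} [NeZero L] (x : Fin d → ZMod L)
    (h : torusDist (0 : Fin d → ZMod L) x = 1) :
    ∃ j : Fin d, ∃ b : Bool, x = Pi.single j (if b then 1 else -1) := by
  unfold torusDist at h
  have hj : ∃ j, min ((0 : Fin d → ZMod L) j - x j).val (x j - (0 : Fin d → ZMod L) j).val ≠ 0 := by
    by_contra! hc
    rw [Finset.sum_eq_zero (fun i _ => hc i)] at h
    omega
  obtain ⟨j, hj⟩ := hj
  have h1 := Finset.add_sum_erase Finset.univ
    (fun i => min ((0 : Fin d → ZMod L) i - x i).val (x i - (0 : Fin d → ZMod L) i).val)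
    (Finset.mem_univ j)
  rw [h] at h1
  have hz : ∑ i ∈ Finset.univ.erase j,
      min ((0 : Fin d → ZMod L) i - x i).val (x i - (0 : Fin d → ZMod L) i).val = 0 := by omega
  have hone : min ((0 : Fin d → ZMod L) j - x j).val (x j - (0 : Fin d → ZMod L) j).val = 1 := by
    omega
  rw [Finset.sum_eq_zero_iff] at hz
  have hzero : ∀ i, i ≠ j → x i = 0 := by
    intro i hi
    have := hz i (by simp [hi])
    simp only [Pi.zero_apply, zero_sub, sub_zero] at this
    rcases Nat.min_eq_zero_iff.mp this with h | h
    · simpa using (ZMod.val_eq_zero _).mp h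
    · exact (ZMod.val_eq_zero _).mp h
  have key : ∀ y : ZMod L, y.val = 1 → y = 1 := by
    intro y hy
    have := ZMod.natCast_zmod_val y
    rw [hy] at this
    simpa using this.symm
  simp only [Pi.zero_apply, zero_sub, sub_zero] at hone
  refine ⟨j, ?_⟩
  rcases min_choice (-x j).val (x j).val with hm | hm
  · refine ⟨false, ?_⟩
    rw [hm] at hone
    have := key _ hone
    ext i
    by_cases hi : i = j
    · subst hi; simp [← this]
    · simp [hi, hzero i hi]
  · refine ⟨true, ?_⟩
    rw [hm] at hone
    have := key _ hone
    ext i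
    by_cases hi : i = j
    · subst hi; simp [← this]
    · simp [hi, hzero i hi]

/-- real generating function -/
def g (d L : ℕ) [NeZero L] (lam : ℝ) (x : Fin d → ZMod L) : ℝ :=
  if x = 0 then 1 / (1 + 2 * d * lam ^ 2)
  else if torusDist 0 x = 1 then lam ^ 2 / (1 + 2 * d * lam ^ 2) else 0

lemma SB_eq (d L : ℕ) [NeZero L] (lam : ℝ) (a b : Fin d → ZMod L) :
    SBmat d L lam a b = (g d L lam (b - a) : ℂ) := by
  have h1 : torusDist 0 (b - a) = torusDist a b := by
    unfold torusDist
    simp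
  unfold SBmat g
  rw [h1, Matrix.of_apply]
  by_cases h : a = b
  · simp [h]
  · have : b - a ≠ 0 := sub_ne_zero.mpr (Ne.symm h)
    simp only [h, this, if_false]
    split_ifs <;> simp

lemma g_nonneg (d L : ℕ) [NeZero L] (lam : ℝ) (x : Fin d → ZMod L) : 0 ≤ g d L lam x := by
  unfold g; split_ifs <;> positivity

lemma g_sum_le (d L : ℕ) [NeZero L] (lam : ℝ) : ∑ x, g d L lam x ≤ 1 := by
  classical
  set w := 1 / (1 + 2 * d * lam ^ 2) with hw
  set v := lam ^ 2 / (1 + 2 * d * lam ^ 2) with hv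
  have hv0 : 0 ≤ v := by positivity
  have hb : ∀ x, g d L lam x ≤ (if x = 0 then w else 0) +
      ∑ p : Fin d × Bool, if x = Pi.single p.1 (if p.2 then (1 : ZMod L) else -1) then v else 0 := by
    intro x
    have hs : 0 ≤ ∑ p : Fin d × Bool,
        if x = Pi.single p.1 (if p.2 then (1 : ZMod L) else -1) then v else 0 :=
      Finset.sum_nonneg (fun p _ => by split_ifs <;> simp [hv0])
    have hw0 : 0 ≤ w := by positivity
    unfold g
    by_cases h0 : x = 0
    · simp only [h0, if_true]; rw [h0] at hs; linarith
    · simp only [h0, if_false, zero_add]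
      split_ifs with h
      · obtain ⟨j, b, hx⟩ := dist_eq_one x h
        refine le_trans ?_ (Finset.single_le_sum (f := fun p : Fin d × Bool =>
          if x = Pi.single p.1 (if p.2 then (1 : ZMod L) else -1) then v else 0)
          (fun p _ => by split_ifs <;> simp [hv0]) (Finset.mem_univ (j, b)))
        simp only [hx, if_true]
        exact le_refl _
      · exact hs
  refine (Finset.sum_le_sum (fun x _ => hb x)).trans ?_
  rw [Finset.sum_add_distrib, Finset.sum_comm]
  simp only [Finset.sum_ite_eq', Finset.mem_univ, if_true, Finset.sum_const, Finset.card_univ,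
    Fintype.card_prod, Fintype.card_fin, Fintype.card_bool, nsmul_eq_mul]
  rw [hw, hv]
  have : (0 : ℝ) < 1 + 2 * d * lam ^ 2 := by positivity
  apply le_of_eq
  push_cast
  field_simp

/-- roots of unity are separated from one -/
lemma root_sep {L : ℕ} (hL : 2 ≤ L) (z : ℂ) (hz : z ^ L = 1) (h1 : z ≠ 1) (hn : ‖z‖ = 1) :
    1 ≤ L * ‖z - 1‖ := by
  by_contra! hc
  have hb : ∀ k : ℕ, ‖z ^ k - 1‖ ≤ k * ‖z - 1‖ := by
    intro k
    induction k with
    | zero => simp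
    | succ k ih =>
      have : z ^ (k + 1) - 1 = z ^ k * (z - 1) + (z ^ k - 1) := by ring
      rw [this]
      refine (norm_add_le _ _).trans ?_
      rw [norm_mul, norm_pow, hn, one_pow]
      push_cast
      linarith
  have hre : ∀ k ∈ Finset.range L, 0 < (z ^ k).re := by
    intro k hk
    have hk' : (k : ℝ) ≤ L := by exact_mod_cast (Finset.mem_range.mp hk).le
    have h2 : ‖z ^ k - 1‖ < 1 := lt_of_le_of_lt ((hb k).trans
      (mul_le_mul_of_nonneg_right hk' (norm_nonneg _))) hc
    have h3 := Complex.abs_re_le_norm (z ^ k - 1)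
    have h4 := abs_lt.mp (lt_of_le_of_lt h3 h2)
    simp only [Complex.sub_re, Complex.one_re] at h4
    linarith
  have hs : ∑ k ∈ Finset.range L, z ^ k = 0 := by
    have := mul_geom_sum z L
    rw [hz, sub_self] at this
    exact (mul_eq_zero.mp this).resolve_left (sub_ne_zero.mpr h1)
  have hs' := congrArg Complex.re hs
  rw [Complex.re_sum] at hs'
  have := Finset.sum_pos hre ⟨0, Finset.mem_range.mpr (by omega)⟩
  simp at hs'
  linarith

lemma norm_comb {w v : ℝ} (hw : 0 < w) (hv : 0 < v) {z : ℂ} (hn : ‖z‖ = 1) :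
    ‖(w : ℂ) + v * z‖ ≤ w + v - w * v / (w + v) * (‖z - 1‖ ^ 2 / 2) := by
  have h1 : ‖z - 1‖ ^ 2 = 2 - 2 * z.re := by
    rw [← Complex.normSq_eq_norm_sq, Complex.normSq_apply]
    have : ‖z‖ ^ 2 = 1 := by rw [hn]; norm_num
    rw [← Complex.normSq_eq_norm_sq, Complex.normSq_apply] at this
    simp
    linarith
  have h2 : ‖(w : ℂ) + v * z‖ ^ 2 = (w + v) ^ 2 - w * v * ‖z - 1‖ ^ 2 := by
    rw [h1, ← Complex.normSq_eq_norm_sq, Complex.normSq_apply]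
    have : ‖z‖ ^ 2 = 1 := by rw [hn]; norm_num
    rw [← Complex.normSq_eq_norm_sq, Complex.normSq_apply] at this
    simp
    linear_combination v ^ 2 * this
  have h3 : ‖z - 1‖ ^ 2 ≤ 4 := by
    have : ‖z - 1‖ ≤ 2 := (norm_sub_le _ _).trans (by rw [hn]; norm_num)
    nlinarith [norm_nonneg (z - 1)]
  set y := ‖z - 1‖ ^ 2
  have hy : 0 ≤ y := by positivity
  have hwv : 0 < w + v := by positivity
  set q := w * v / (w + v) with hq
  have hq' : q * (w + v) = w * v := by rw [hq]; field_simp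
  have hq0 : 0 < q := by positivity
  have hpos : 0 ≤ w + v - q * (y / 2) := by
    have : q * 2 ≤ w + v := by
      by_contra! hc
      nlinarith [sq_nonneg (w - v)]
    nlinarith
  apply abs_le_of_sq_le_sq' _ hpos |>.2
  rw [h2]
  nlinarith [sq_nonneg (q * (y / 2))]

/-- symbol -/
def sym (d L : ℕ) [NeZero L] (lam : ℝ) (ψ : AddChar (Fin d → ZMod L) ℂ) : ℂ :=
  ∑ x, (g d L lam x : ℂ) * ψ x

lemma sym_bound {d L : ℕ} [NeZero L] (hL : 2 ≤ L) {lam : ℝ} (hl : 0 < lam)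
    (ψ : AddChar (Fin d → ZMod L) ℂ) (hψ : ψ ≠ 1) :
    ‖sym d L lam ψ‖ ≤ 1 - (lam ^ 2 / (1 + lam ^ 2) / (1 + 2 * d * lam ^ 2)) / 2 / (L : ℝ) ^ 2 := by
  classical
  have : Fact (1 < L) := ⟨hL⟩
  have hj : ∃ j : Fin d, ψ (Pi.single j 1) ≠ 1 := by
    by_contra! hc
    apply hψ
    ext x
    have hx : x = ∑ j, (x j).val • (Pi.single j 1 : Fin d → ZMod L) := by
      ext i
      rw [Finset.sum_apply]
      simp [Pi.single_apply]
    rw [hx]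
    have : ∀ s : Finset (Fin d),
        ψ (∑ j ∈ s, (x j).val • (Pi.single j 1 : Fin d → ZMod L)) = 1 := by
      intro s
      induction s using Finset.induction_on with
      | empty => simp
      | insert a s ha ih =>
        rw [Finset.sum_insert ha, AddChar.map_add_eq_mul, ih, AddChar.map_nsmul_eq_pow, hc]
        simp
    rw [this]; simp
  obtain ⟨j, hj⟩ := hj
  set e : Fin d → ZMod L := Pi.single j 1 with he
  set z := ψ e with hz
  have hn : ‖z‖ = 1 := AddChar.norm_apply ψ e
  have hzL : z ^ L = 1 := by
    rw [hz, ← AddChar.map_nsmul_eq_pow]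
    have : L • e = 0 := by
      ext i; simp
    rw [this]; simp
  have hsep := root_sep hL z hzL hj hn
  have he0 : e ≠ 0 := by
    intro h
    have := congrFun h j
    simp [he] at this
  set w := 1 / (1 + 2 * d * lam ^ 2) with hw
  set v := lam ^ 2 / (1 + 2 * d * lam ^ 2) with hv
  have hg0 : g d L lam 0 = w := by simp [g, hw]
  have hge : g d L lam e = v := by simp [g, hv, he, dist_zero_single hL j]
  have hsplit : ∀ {M : Type} [AddCommMonoid M] (f : (Fin d → ZMod L) → M),
      ∑ x, f x = f 0 + (f e + ∑ x ∈ (Finset.univ.erase 0).erase e, f x) := by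
    intro M _ f
    rw [Finset.add_sum_erase _ _ (by simp [he0]), Finset.add_sum_erase _ _ (by simp)]
  have hrest := g_sum_le d L lam
  rw [hsplit, hg0, hge] at hrest
  unfold sym
  rw [hsplit, hg0, hge, ← add_assoc, AddChar.map_zero_eq_one, mul_one]
  refine (norm_add_le _ _).trans ?_
  have h1 : ‖∑ x ∈ (Finset.univ.erase 0).erase e, (g d L lam x : ℂ) * ψ x‖ ≤
      ∑ x ∈ (Finset.univ.erase 0).erase e, g d L lam x := by
    refine (norm_sum_le _ _).trans (Finset.sum_le_sum fun x _ => ?_)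
    rw [norm_mul, AddChar.norm_apply, mul_one, Complex.norm_real, Real.norm_eq_abs,
      abs_of_nonneg (g_nonneg d L lam x)]
  have hD : (0 : ℝ) < 1 + 2 * d * lam ^ 2 := by positivity
  have hw0 : 0 < w := by positivity
  have hv0 : 0 < v := by positivity
  have h2 := norm_comb hw0 hv0 hn
  have hq : w * v / (w + v) = lam ^ 2 / (1 + lam ^ 2) / (1 + 2 * d * lam ^ 2) := by
    rw [hw, hv]; field_simp
  rw [hq] at h2
  have hLp : (0 : ℝ) < L := by positivity
  have h3 : 1 / (L : ℝ) ^ 2 ≤ ‖z - 1‖ ^ 2 := by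
    rw [div_le_iff₀ (by positivity)]
    nlinarith [norm_nonneg (z - 1)]
  have hq0 : 0 ≤ lam ^ 2 / (1 + lam ^ 2) / (1 + 2 * d * lam ^ 2) := by positivity
  set q := lam ^ 2 / (1 + lam ^ 2) / (1 + 2 * d * lam ^ 2)
  have h4 : q * (1 / (L : ℝ) ^ 2) ≤ q * ‖z - 1‖ ^ 2 := mul_le_mul_of_nonneg_left h3 hq0
  have h5 : q / 2 / (L : ℝ) ^ 2 = q * (1 / (L : ℝ) ^ 2) / 2 := by ring
  rw [h5]
  linarith

lemma SB_pow (d L : ℕ) [NeZero L] (lam : ℝ) (k : ℕ) (a b : Fin d → ZMod L) :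
    (SBmat d L lam ^ k) a b = ((L : ℂ) ^ d)⁻¹ *
      ∑ ψ : AddChar (Fin d → ZMod L) ℂ, sym d L lam ψ ^ k * ψ (a - b) := by
  classical
  have hcard : (Fintype.card (Fin d → ZMod L) : ℂ) = (L : ℂ) ^ d := by
    simp [ZMod.card]
  have hL0 : (L : ℂ) ^ d ≠ 0 := pow_ne_zero _ (by exact_mod_cast NeZero.ne L)
  induction k generalizing a with
  | zero =>
    simp only [pow_zero, one_mul]
    rw [AddChar.sum_apply_eq_ite, hcard, Matrix.one_apply]
    by_cases h : a = b
    · simp [h, hL0]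
    · simp [h, sub_ne_zero.mpr h]
  | succ k ih =>
    rw [pow_succ', Matrix.mul_apply]
    simp_rw [ih, SB_eq, mul_left_comm _ (((L : ℂ) ^ d)⁻¹), ← Finset.mul_sum]
    congr 1
    simp_rw [Finset.mul_sum]
    rw [Finset.sum_comm]
    refine Finset.sum_congr rfl fun ψ _ => ?_
    rw [pow_succ, mul_assoc, sym, Finset.sum_mul, Finset.mul_sum]
    rw [← Equiv.sum_comp (Equiv.addRight a)]
    refine Finset.sum_congr rfl fun x _ => ?_
    simp only [Equiv.coe_addRight, add_sub_cancel_right]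
    rw [add_sub_assoc, AddChar.map_add_eq_mul]
    ring


/-- averaging matrix -/
def Pm (d L : ℕ) [NeZero L] : Matrix (Fin d → ZMod L) (Fin d → ZMod L) ℂ :=
  Matrix.of fun _ _ => ((L : ℂ) ^ d)⁻¹

lemma norm_le_of_row {ι : Type*} [Fintype ι] (M : Matrix ι ι ℂ) (c : ℝ) (hc : 0 ≤ c)
    (h : ∀ a, ∑ b, ‖M a b‖ ≤ c) : ‖M‖ ≤ c := by
  lift c to NNReal using hc
  rw [Matrix.linfty_opNorm_def]
  rw [NNReal.coe_le_coe]
  apply Finset.sup_le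
  intro a _
  rw [← NNReal.coe_le_coe]
  push_cast
  exact h a

lemma row_le_norm {ι : Type*} [Fintype ι] (M : Matrix ι ι ℂ) (a : ι) :
    ∑ b, ‖M a b‖ ≤ ‖M‖ := by
  rw [Matrix.linfty_opNorm_def]
  have := Finset.le_sup (f := fun i => ∑ j, ‖M i j‖₊) (Finset.mem_univ a)
  rw [← NNReal.coe_le_coe] at this
  simpa using this

lemma card_G (d L : ℕ) [NeZero L] : Fintype.card (Fin d → ZMod L) = L ^ d := by
  simp [ZMod.card]

lemma norm_Pm (d L : ℕ) [NeZero L] : ‖Pm d L‖ ≤ 1 := by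
  apply norm_le_of_row _ _ zero_le_one
  intro a
  have hL0 : (L : ℝ) ^ d ≠ 0 := pow_ne_zero _ (by exact_mod_cast NeZero.ne L)
  simp only [Pm, Matrix.of_apply, Finset.sum_const, Finset.card_univ, card_G, nsmul_eq_mul]
  simp [hL0]

lemma norm_one_sub_Pm (d L : ℕ) [NeZero L] : ‖1 - Pm d L‖ ≤ 2 := by
  refine (norm_sub_le _ _).trans ?_
  have := norm_Pm d L
  rw [norm_one]
  linarith

/-- row sum -/
def rs (d L : ℕ) [NeZero L] (lam : ℝ) : ℝ := ∑ x, g d L lam x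

lemma rs_nonneg (d L : ℕ) [NeZero L] (lam : ℝ) : 0 ≤ rs d L lam :=
  Finset.sum_nonneg fun x _ => g_nonneg d L lam x

lemma norm_SB (d L : ℕ) [NeZero L] (lam : ℝ) : ‖SBmat d L lam‖ ≤ 1 := by
  apply norm_le_of_row _ _ zero_le_one
  intro a
  simp_rw [SB_eq, Complex.norm_real, Real.norm_eq_abs, abs_of_nonneg (g_nonneg d L lam _)]
  rw [← Equiv.sum_comp (Equiv.addRight a)]
  simpa using g_sum_le d L lam

lemma SB_mul_Pm (d L : ℕ) [NeZero L] (lam : ℝ) :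
    SBmat d L lam * Pm d L = (rs d L lam : ℂ) • Pm d L := by
  ext a b
  simp only [Matrix.mul_apply, Pm, Matrix.of_apply, Matrix.smul_apply, smul_eq_mul, SB_eq]
  rw [← Finset.sum_mul, ← Equiv.sum_comp (Equiv.addRight a)]
  simp [rs]

lemma Pm_mul_SB (d L : ℕ) [NeZero L] (lam : ℝ) :
    Pm d L * SBmat d L lam = (rs d L lam : ℂ) • Pm d L := by
  ext a b
  simp only [Matrix.mul_apply, Pm, Matrix.of_apply, Matrix.smul_apply, smul_eq_mul, SB_eq]
  rw [← Finset.mul_sum, ← Equiv.sum_comp (Equiv.subLeft b)]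
  simp [rs, mul_comm]

lemma SB_pow_mul_Pm (d L : ℕ) [NeZero L] (lam : ℝ) (k : ℕ) :
    SBmat d L lam ^ k * Pm d L = (rs d L lam : ℂ) ^ k • Pm d L := by
  induction k with
  | zero => simp
  | succ k ih => rw [pow_succ, mul_assoc, SB_mul_Pm, Matrix.mul_smul, ih, smul_smul, pow_succ']

lemma sym_one (d L : ℕ) [NeZero L] (lam : ℝ) : sym d L lam 1 = (rs d L lam : ℂ) := by
  simp [sym, rs]

lemma SBQ_entry {d L : ℕ} [NeZero L] (lam : ℝ) (ρ : ℝ)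
    (hρ : ∀ ψ : AddChar (Fin d → ZMod L) ℂ, ψ ≠ 1 → ‖sym d L lam ψ‖ ≤ ρ) (hρ0 : 0 ≤ ρ) (k : ℕ)
    (a b : Fin d → ZMod L) :
    ‖(SBmat d L lam ^ k * (1 - Pm d L)) a b‖ ≤ ρ ^ k := by
  classical
  have hL0 : (L : ℝ) ^ d ≠ 0 := pow_ne_zero _ (by exact_mod_cast NeZero.ne L)
  rw [mul_sub, mul_one, SB_pow_mul_Pm, Matrix.sub_apply, SB_pow]
  simp only [Pm, Matrix.smul_apply, Matrix.of_apply, smul_eq_mul]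
  rw [← Finset.add_sum_erase _ _ (Finset.mem_univ (1 : AddChar (Fin d → ZMod L) ℂ)), sym_one]
  rw [AddChar.one_apply, mul_one, mul_comm ((rs d L lam : ℂ) ^ k), mul_add, add_sub_cancel_left,
    norm_mul, norm_inv, norm_pow, Complex.norm_natCast]
  rw [inv_mul_le_iff₀ (by positivity)]
  refine (norm_sum_le _ _).trans ?_
  have : ∀ ψ ∈ Finset.univ.erase (1 : AddChar (Fin d → ZMod L) ℂ),
      ‖sym d L lam ψ ^ k * ψ (a - b)‖ ≤ ρ ^ k := by
    intro ψ hψ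
    rw [norm_mul, AddChar.norm_apply, mul_one, norm_pow]
    exact pow_le_pow_left₀ (norm_nonneg _) (hρ ψ (Finset.ne_of_mem_erase hψ)) k
  refine (Finset.sum_le_sum this).trans ?_
  rw [Finset.sum_const, nsmul_eq_mul]
  apply mul_le_mul_of_nonneg_right _ (pow_nonneg hρ0 k)
  have h1 : (Finset.univ.erase (1 : AddChar (Fin d → ZMod L) ℂ)).card ≤ L ^ d := by
    rw [← card_G, ← AddChar.card_eq (α := Fin d → ZMod L)]
    exact Finset.card_le_univ _
  exact_mod_cast h1

lemma SBQ_norm {d L : ℕ} [NeZero L] (lam : ℝ) (ρ : ℝ)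
    (hρ : ∀ ψ : AddChar (Fin d → ZMod L) ℂ, ψ ≠ 1 → ‖sym d L lam ψ‖ ≤ ρ) (hρ0 : 0 ≤ ρ) (k : ℕ)
    (ε : ℝ) (hε0 : 0 < ε) (hε1 : ε ≤ 1) :
    ‖SBmat d L lam ^ k * (1 - Pm d L)‖ ≤ 2 * ((L : ℝ) ^ d) ^ ε * (ρ ^ ε) ^ k := by
  have h1 : ‖SBmat d L lam ^ k * (1 - Pm d L)‖ ≤ 2 := by
    refine (norm_mul_le _ _).trans ?_
    have h2 := norm_one_sub_Pm d L
    have h3 : ‖SBmat d L lam ^ k‖ ≤ 1 :=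
      (norm_pow_le _ _).trans (pow_le_one₀ (norm_nonneg _) (norm_SB d L lam))
    nlinarith [norm_nonneg (SBmat d L lam ^ k), norm_nonneg (1 - Pm d L)]
  have h2 : ‖SBmat d L lam ^ k * (1 - Pm d L)‖ ≤ (L : ℝ) ^ d * ρ ^ k := by
    apply norm_le_of_row _ _ (by positivity)
    intro a
    refine (Finset.sum_le_sum fun b _ => SBQ_entry lam ρ hρ hρ0 k a b).trans ?_
    rw [Finset.sum_const, Finset.card_univ, card_G, nsmul_eq_mul]
    push_cast
    exact le_refl _
  set x := ‖SBmat d L lam ^ k * (1 - Pm d L)‖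
  have hx : 0 ≤ x := norm_nonneg _
  have hx' : x = x ^ (1 - ε) * x ^ ε := by
    rw [← Real.rpow_add_of_nonneg hx (by linarith) hε0.le]; simp
  rw [hx']
  have h3 : x ^ (1 - ε) ≤ 2 := by
    refine (Real.rpow_le_rpow hx h1 (by linarith)).trans ?_
    have := Real.rpow_le_rpow_of_exponent_le (x := 2) (by norm_num) (show 1 - ε ≤ 1 by linarith)
    simpa using this
  have h4 : x ^ ε ≤ ((L : ℝ) ^ d) ^ ε * (ρ ^ ε) ^ k := by
    refine (Real.rpow_le_rpow hx h2 hε0.le).trans ?_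
    rw [Real.mul_rpow (by positivity) (by positivity)]
    rw [← Real.rpow_natCast (ρ ^ ε), ← Real.rpow_mul hρ0, mul_comm ε, Real.rpow_mul hρ0,
      Real.rpow_natCast]
  rw [mul_assoc]
  exact mul_le_mul h3 h4 (by positivity) (by norm_num)

lemma res_norm {d L : ℕ} [NeZero L] (lam : ℝ) (δ : ℝ) (hδ0 : 0 < δ) (hδ1 : δ ≤ 1)
    (hρ : ∀ ψ : AddChar (Fin d → ZMod L) ℂ, ψ ≠ 1 → ‖sym d L lam ψ‖ ≤ 1 - δ)
    (ε : ℝ) (hε0 : 0 < ε) (hε1 : ε ≤ 1) (ζ : ℂ) (hζ : ‖ζ‖ < 1) :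
    (1 - ζ • SBmat d L lam) * (1 - ζ • SBmat d L lam)⁻¹ = 1 ∧
    ‖(1 - ζ • SBmat d L lam)⁻¹ * (1 - Pm d L)‖ ≤ 2 * ((L : ℝ) ^ d) ^ ε / (ε * δ) := by
  set X := ζ • SBmat d L lam with hX
  have hXn : ‖X‖ < 1 := by
    rw [hX, norm_smul]
    have := norm_SB d L lam
    nlinarith [norm_nonneg ζ, norm_nonneg (SBmat d L lam)]
  have hinv : (1 - X) * ∑' i : ℕ, X ^ i = 1 := mul_neg_geom_series X hXn
  have hR : (1 - X)⁻¹ = ∑' i : ℕ, X ^ i := Matrix.inv_eq_right_inv hinv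
  refine ⟨by rw [hR]; exact hinv, ?_⟩
  have hsum : HasSum (fun i : ℕ => X ^ i) (∑' i : ℕ, X ^ i) :=
    (summable_geometric_of_norm_lt_one hXn).hasSum
  have hsum2 := hsum.mul_right (1 - Pm d L)
  rw [hR, ← hsum2.tsum_eq]
  have hr1 : (1 - δ) ^ ε ≤ 1 - ε * δ := by
    have := rpow_one_add_le_one_add_mul_self (s := -δ) (by linarith) hε0.le hε1
    have e : 1 + -δ = 1 - δ := by ring
    rw [e] at this
    linarith
  have hr0 : 0 ≤ (1 - δ) ^ ε := Real.rpow_nonneg (by linarith) _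
  have hlt : (1 - δ) ^ ε < 1 := by nlinarith
  have hg := (hasSum_geometric_of_lt_one hr0 hlt).mul_left (2 * ((L : ℝ) ^ d) ^ ε)
  refine (tsum_of_norm_bounded hg ?_).trans ?_
  · intro k
    refine le_trans ?_ (SBQ_norm lam (1 - δ) hρ (by linarith) k ε hε0 hε1)
    rw [hX, smul_pow, Matrix.smul_mul, norm_smul, norm_pow]
    have : ‖ζ‖ ^ k ≤ 1 := pow_le_one₀ (norm_nonneg _) hζ.le
    exact mul_le_of_le_one_left (norm_nonneg _) this
  · rw [div_eq_mul_inv]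
    apply mul_le_mul_of_nonneg_left _ (by positivity)
    apply inv_anti₀ (by positivity)
    linarith

/-- the one-site kernel -/
def Km (d L : ℕ) [NeZero L] (lam : ℝ) (ζs ζt : ℂ) : Matrix (Fin d → ZMod L) (Fin d → ZMod L) ℂ :=
  (1 - ζs • SBmat d L lam) * (1 - ζt • SBmat d L lam)⁻¹

lemma QK_norm {d L : ℕ} [NeZero L] (lam : ℝ) (δ : ℝ) (hδ0 : 0 < δ) (hδ1 : δ ≤ 1)
    (hρ : ∀ ψ : AddChar (Fin d → ZMod L) ℂ, ψ ≠ 1 → ‖sym d L lam ψ‖ ≤ 1 - δ)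
    (ε : ℝ) (hε0 : 0 < ε) (hε1 : ε ≤ 1) (ζs ζt : ℂ) (hζ : ‖ζt‖ < 1) :
    ‖(1 - Pm d L) * Km d L lam ζs ζt‖ ≤
      2 + ‖ζt - ζs‖ * (2 * ((L : ℝ) ^ d) ^ ε / (ε * δ)) := by
  obtain ⟨h1, h2⟩ := res_norm lam δ hδ0 hδ1 hρ ε hε0 hε1 ζt hζ
  unfold Km
  set S := SBmat d L lam with hS
  set R := (1 - ζt • S)⁻¹ with hR
  set Q := 1 - Pm d L with hQ
  have h1' : R * (1 - ζt • S) = 1 := mul_eq_one_comm.mp h1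
  have hPS : Pm d L * S = S * Pm d L := by rw [hS, Pm_mul_SB, SB_mul_Pm]
  have hQS : Q * S = S * Q := by rw [hQ, sub_mul, mul_sub, hPS]; simp
  have hQT : Q * (1 - ζt • S) = (1 - ζt • S) * Q := by
    rw [mul_sub Q, sub_mul _ _ Q, Matrix.mul_smul, Matrix.smul_mul, hQS, mul_one, one_mul]
  have hQR : Q * R = R * Q := by
    calc Q * R = R * ((1 - ζt • S) * Q) * R := by rw [← mul_assoc, h1', one_mul]
      _ = R * Q * ((1 - ζt • S) * R) := by rw [← hQT]; simp only [mul_assoc]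
      _ = R * Q := by rw [h1, mul_one]
  have hdec : (1 - ζs • S) * R = 1 + (ζt - ζs) • (S * R) := by
    have : (1 - ζs • S) = (1 - ζt • S) + (ζt - ζs) • S := by rw [sub_smul]; abel
    rw [this, add_mul, h1, Matrix.smul_mul]
  rw [hdec, mul_add, mul_one, Matrix.mul_smul, ← mul_assoc, hQS, mul_assoc, hQR]
  refine (norm_add_le _ _).trans (add_le_add (norm_one_sub_Pm d L) ?_)
  rw [norm_smul]
  apply mul_le_mul_of_nonneg_left _ (norm_nonneg _)
  refine (norm_mul_le _ _).trans ?_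
  exact (mul_le_of_le_one_left (norm_nonneg _) (norm_SB d L lam)).trans h2

lemma PK_norm {d L : ℕ} [NeZero L] (lam : ℝ) (ζs ζt : ℂ)
    (h1 : (1 - ζt • SBmat d L lam) * (1 - ζt • SBmat d L lam)⁻¹ = 1) (hs : ‖ζs‖ ≤ 1)
    (c : ℝ) (hc : 0 < c) (hlow : c ≤ ‖1 - ζt * rs d L lam‖) :
    ‖Pm d L * Km d L lam ζs ζt‖ ≤ 2 / c := by
  unfold Km
  set S := SBmat d L lam with hS
  set R := (1 - ζt • S)⁻¹ with hR
  set r : ℂ := (rs d L lam : ℂ) with hr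
  have hP : ∀ ζ : ℂ, Pm d L * (1 - ζ • S) = (1 - ζ * r) • Pm d L := by
    intro ζ
    rw [mul_sub, Matrix.mul_smul, Pm_mul_SB, smul_smul, sub_smul]; simp [hr]
  have hne : 1 - ζt * r ≠ 0 := by
    intro h; rw [h, norm_zero] at hlow; linarith
  have hPR : Pm d L * R = (1 - ζt * r)⁻¹ • Pm d L := by
    have : (1 - ζt * r) • (Pm d L * R) = Pm d L := by
      rw [← Matrix.smul_mul, ← hP, mul_assoc, h1, mul_one]
    rw [← this, smul_smul, inv_mul_cancel₀ hne, one_smul, this]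
  rw [← mul_assoc, hP, Matrix.smul_mul, hPR, smul_smul, norm_smul]
  refine (mul_le_of_le_one_right (norm_nonneg _) (norm_Pm d L)).trans ?_
  rw [norm_mul, norm_inv, ← div_eq_mul_inv]
  apply div_le_div₀ (by norm_num) _ hc hlow
  refine (norm_sub_le _ _).trans ?_
  rw [norm_one, norm_mul, hr, Complex.norm_real, Real.norm_eq_abs, abs_of_nonneg (rs_nonneg _ _ _)]
  have : rs d L lam ≤ 1 := g_sum_le d L lam
  nlinarith [norm_nonneg ζs, rs_nonneg d L lam]

/-- tensor operator -/
def Top {d L n : ℕ} [NeZero L] (M : Fin n → Matrix (Fin d → ZMod L) (Fin d → ZMod L) ℂ)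
    (A : (Fin n → Fin d → ZMod L) → ℂ) : (Fin n → Fin d → ZMod L) → ℂ :=
  fun a => ∑ b : Fin n → Fin d → ZMod L, (∏ i, M i (a i) (b i)) * A b

lemma Qrem_Top {d L n : ℕ} [NeZero L] (M : Fin n → Matrix (Fin d → ZMod L) (Fin d → ZMod L) ℂ)
    (A : (Fin n → Fin d → ZMod L) → ℂ) (i : Fin n) :
    Qrem d L n i (Top M A) = Top (Function.update M i ((1 - Pm d L) * M i)) A := by
  ext a
  unfold Qrem Pavg Top
  rw [Finset.sum_comm, Finset.mul_sum, ← Finset.sum_sub_distrib]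
  refine Finset.sum_congr rfl fun b _ => ?_
  rw [← Finset.sum_mul, ← mul_assoc, ← sub_mul]
  congr 1
  have e1 : ∀ c : Fin d → ZMod L, ∏ j, M j (Function.update a i c j) (b j) =
      M i c (b i) * ∏ j ∈ Finset.univ.erase i, M j (a j) (b j) := by
    intro c
    rw [← Finset.mul_prod_erase _ _ (Finset.mem_univ i), Function.update_self]
    congr 1
    refine Finset.prod_congr rfl fun j hj => ?_
    rw [Function.update_of_ne (Finset.ne_of_mem_erase hj)]
  have e2 : ∏ j, Function.update M i ((1 - Pm d L) * M i) j (a j) (b j) =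
      ((1 - Pm d L) * M i) (a i) (b i) * ∏ j ∈ Finset.univ.erase i, M j (a j) (b j) := by
    rw [← Finset.mul_prod_erase _ _ (Finset.mem_univ i), Function.update_self]
    congr 1
    refine Finset.prod_congr rfl fun j hj => ?_
    rw [Function.update_of_ne (Finset.ne_of_mem_erase hj)]
  rw [e2]
  simp_rw [e1]
  rw [← Finset.sum_mul, ← Finset.mul_prod_erase _ _ (Finset.mem_univ i), ← mul_assoc, ← sub_mul]
  congr 1
  rw [sub_mul, one_mul, Matrix.sub_apply, Matrix.mul_apply]
  simp only [Pm, Matrix.of_apply]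
  rw [Finset.mul_sum]

lemma foldr_Top {d L n : ℕ} [NeZero L] (M : Fin n → Matrix (Fin d → ZMod L) (Fin d → ZMod L) ℂ)
    (A : (Fin n → Fin d → ZMod L) → ℂ) (l : List (Fin n)) (hl : l.Nodup) :
    l.foldr (fun i acc => Qrem d L n i acc) (Top M A) =
      Top (fun i => if i ∈ l then (1 - Pm d L) * M i else M i) A := by
  induction l with
  | nil => simp
  | cons j l ih =>
    rw [List.nodup_cons] at hl
    rw [List.foldr_cons, ih hl.2, Qrem_Top]
    congr 1
    ext1 i
    by_cases h : i = j
    · subst h; simp [hl.1]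
    · simp [h]

lemma Top_bound {d L n : ℕ} [NeZero L] (M : Fin n → Matrix (Fin d → ZMod L) (Fin d → ZMod L) ℂ)
    (A : (Fin n → Fin d → ZMod L) → ℂ) (B : ℝ) (hM : ∀ i, ‖M i‖ ≤ B)
    (a : Fin n → Fin d → ZMod L) : ‖Top M A a‖ ≤ B ^ n * ⨆ b, ‖A b‖ := by
  have hA : ∀ b, ‖A b‖ ≤ ⨆ b, ‖A b‖ := fun b =>
    le_ciSup (f := fun b => ‖A b‖) (Set.finite_range _).bddAbove b
  have hA0 : 0 ≤ ⨆ b, ‖A b‖ := Real.iSup_nonneg fun b => norm_nonneg _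
  unfold Top
  refine (norm_sum_le _ _).trans ?_
  have : ∀ b ∈ (Finset.univ : Finset (Fin n → Fin d → ZMod L)),
      ‖(∏ i, M i (a i) (b i)) * A b‖ ≤ (∏ i, ‖M i (a i) (b i)‖) * ⨆ b, ‖A b‖ := by
    intro b _
    rw [norm_mul, norm_prod]
    exact mul_le_mul_of_nonneg_left (hA b) (Finset.prod_nonneg fun _ _ => norm_nonneg _)
  refine (Finset.sum_le_sum this).trans ?_
  rw [← Finset.sum_mul]
  apply mul_le_mul_of_nonneg_right _ hA0
  rw [← Fintype.prod_sum (fun i c => ‖M i (a i) c‖)]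
  refine (Finset.prod_le_prod (fun i _ => Finset.sum_nonneg fun _ _ => norm_nonneg _)
    (fun i _ => (row_le_norm (M i) (a i)).trans (hM i))).trans ?_
  simp

lemma mSC_im (E : ℝ) : (mSC E).im = Real.sqrt (4 - E ^ 2) / 2 := by
  unfold mSC
  rw [show (2 : ℂ) = ((2 : ℝ) : ℂ) by norm_num, Complex.div_ofReal_im]
  simp

lemma mSC_re (E : ℝ) : (mSC E).re = - E / 2 := by
  unfold mSC
  rw [show (2 : ℂ) = ((2 : ℝ) : ℂ) by norm_num, Complex.div_ofReal_re]
  simp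

lemma mSC_norm (E : ℝ) (h : E ^ 2 ≤ 4) : ‖mSC E‖ = 1 := by
  have : ‖mSC E‖ ^ 2 = 1 := by
    rw [← Complex.normSq_eq_norm_sq, Complex.normSq_apply, mSC_im, mSC_re]
    have := Real.mul_self_sqrt (show 0 ≤ 4 - E ^ 2 by linarith)
    linear_combination this / 4
  exact (pow_eq_one_iff_of_nonneg (norm_nonneg _) two_ne_zero).mp this

lemma mSign_norm (E : ℝ) (h : E ^ 2 ≤ 4) (b : Bool) : ‖mSign E b‖ = 1 := by
  unfold mSign
  cases b <;> simp [mSC_norm E h]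

lemma mSign_im (E : ℝ) (b : Bool) : |(mSign E b).im| = Real.sqrt (4 - E ^ 2) / 2 := by
  have : |Real.sqrt (4 - E ^ 2) / 2| = Real.sqrt (4 - E ^ 2) / 2 := abs_of_nonneg (by positivity)
  unfold mSign
  cases b <;> simp [mSC_im, abs_neg, this]

lemma low (u : ℂ) (hu : ‖u‖ = 1) (x : ℝ) (hx : 0 ≤ x) : |u.im| ≤ ‖1 - x * u * u‖ := by
  have hcu : (starRingEnd ℂ) u * u = 1 := by
    rw [mul_comm, Complex.mul_conj, Complex.normSq_eq_norm_sq, hu]; simp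
  have h1 : 1 - x * u * u = u * ((starRingEnd ℂ) u - x * u) := by
    linear_combination -hcu
  rw [h1, norm_mul, hu, one_mul]
  refine le_trans ?_ (Complex.abs_im_le_norm _)
  simp only [Complex.sub_im, Complex.conj_im, Complex.mul_im, Complex.ofReal_re, Complex.ofReal_im,
    zero_mul, add_zero]
  rw [show -u.im - x * u.im = -((1 + x) * u.im) by ring, abs_neg, abs_mul,
    abs_of_nonneg (by linarith : 0 ≤ 1 + x)]
  nlinarith [abs_nonneg u.im]

end EK

set_option maxHeartbeats 2000000 in
theorem EK_main (n d : ℕ) [NeZero n] (hn : 2 ≤ n) (hd : 3 ≤ d)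
    (C₀ κ τ : ℝ) (hC₀ : 1 ≤ C₀) (hκ0 : 0 < κ) (hκ1 : κ < 1) (hτ : 0 < τ) :
    ∃ C : ℝ, 0 < C ∧
      ∀ (L : ℕ) [NeZero L], 2 ≤ L →
        ∀ lam : ℝ, C₀⁻¹ ≤ lam → lam ≤ C₀ →
          ∀ E : ℝ, |E| ≤ 2 - κ →
            ∀ σ : Fin n → Bool,
              ∀ s t : ℝ, 1 - ((L : ℝ) ^ 2)⁻¹ ≤ s → s ≤ t → t < 1 →
                ∀ J : Finset (Fin n),
                  (Finset.univ.filter fun i : Fin n => σ i ≠ σ (i + 1)) ⊆ J →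
                  ∀ (A : (Fin n → Fin d → ZMod L) → ℂ) (a : Fin n → Fin d → ZMod L),
                    ‖QremSet d L n J (Ukernel d L lam E s t n σ A) a‖ ≤
                      C * (L : ℝ) ^ τ * (⨆ b : Fin n → Fin d → ZMod L, ‖A b‖) := by
  set D : ℝ := 1 + 2 * d * C₀ ^ 2 with hD
  have hC0 : 0 < C₀ := by linarith
  set q : ℝ := (C₀⁻¹) ^ 2 / (1 + C₀ ^ 2) / D with hq
  have hDpos : 0 < D := by positivity
  have hq0 : 0 < q := by positivity
  have hn0 : (0 : ℝ) < n := by exact_mod_cast (by omega : 0 < n)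
  have hd0 : (0 : ℝ) < d := by exact_mod_cast (by omega : 0 < d)
  set ε : ℝ := min 1 (τ / (n * d)) with hε
  have hε0 : 0 < ε := lt_min one_pos (by positivity)
  have hε1 : ε ≤ 1 := min_le_left _ _
  set c : ℝ := Real.sqrt (4 - (2 - κ) ^ 2) / 2 with hc
  have hc0 : 0 < c := by
    have : 0 < Real.sqrt (4 - (2 - κ) ^ 2) := Real.sqrt_pos.mpr (by nlinarith)
    positivity
  set B : ℝ := 2 + 4 / (ε * q) + 2 / c with hB
  have hB0 : 0 < B := by positivity
  refine ⟨B ^ n, by positivity, ?_⟩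
  intro L _ hL lam hlam1 hlam2 E hE σ s t hs hst ht J hJ A a
  have hLp : (2 : ℝ) ≤ L := by exact_mod_cast hL
  have hlam0 : 0 < lam := lt_of_lt_of_le (by positivity) hlam1
  have hl1 : (C₀⁻¹) ^ 2 ≤ lam ^ 2 := pow_le_pow_left₀ (by positivity) hlam1 2
  have hl2 : lam ^ 2 ≤ C₀ ^ 2 := pow_le_pow_left₀ hlam0.le hlam2 2
  have hql : q ≤ lam ^ 2 / (1 + lam ^ 2) / (1 + 2 * d * lam ^ 2) := by
    rw [hq, hD]
    gcongr
  have hq1 : q ≤ 1 := by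
    refine hql.trans ?_
    rw [div_div]
    apply div_le_one_of_le₀ _ (by positivity)
    have : 0 ≤ (1 + lam ^ 2) * (2 * d * lam ^ 2) := by positivity
    nlinarith
  set δ : ℝ := q / 2 / (L : ℝ) ^ 2 with hδ
  have hδ0 : 0 < δ := by positivity
  have hδ1 : δ ≤ 1 := by
    rw [hδ]; apply div_le_one_of_le₀ _ (by positivity); nlinarith
  have hρ : ∀ ψ : AddChar (Fin d → ZMod L) ℂ, ψ ≠ 1 → ‖EK.sym d L lam ψ‖ ≤ 1 - δ := by
    intro ψ hψ
    refine (EK.sym_bound hL hlam0 ψ hψ).trans ?_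
    apply sub_le_sub_left
    rw [hδ]
    gcongr
  have hE2' : E ^ 2 ≤ (2 - κ) ^ 2 := by
    rw [← sq_abs]; exact pow_le_pow_left₀ (abs_nonneg _) hE 2
  have hE2 : E ^ 2 ≤ 4 := by nlinarith
  have hcE : c ≤ Real.sqrt (4 - E ^ 2) / 2 := by
    rw [hc]
    have := Real.sqrt_le_sqrt (show 4 - (2 - κ) ^ 2 ≤ 4 - E ^ 2 by linarith)
    linarith
  have hinv : ((L : ℝ) ^ 2)⁻¹ ≤ 1 := inv_le_one_of_one_le₀ (by nlinarith)
  have hs0 : 0 ≤ s := by linarith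
  have ht0 : 0 ≤ t := by linarith
  set Λ : ℝ := ((L : ℝ) ^ d) ^ ε with hΛ
  have hΛ1 : 1 ≤ Λ := Real.one_le_rpow (one_le_pow₀ (by linarith)) hε0.le
  set ζ : ℝ → Fin n → ℂ := fun x i => (x : ℂ) * mSign E (σ i) * mSign E (σ (i + 1)) with hζ
  have hζn : ∀ x : ℝ, 0 ≤ x → ∀ i, ‖ζ x i‖ = x := by
    intro x hx i
    simp only [hζ]
    rw [norm_mul, norm_mul, EK.mSign_norm E hE2, EK.mSign_norm E hE2, Complex.norm_real,
      Real.norm_eq_abs, abs_of_nonneg hx]; ring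
  have hζd : ∀ i, ‖ζ t i - ζ s i‖ ≤ ((L : ℝ) ^ 2)⁻¹ := by
    intro i
    have : ζ t i - ζ s i = ζ (t - s) i := by simp only [hζ]; push_cast; ring
    rw [this, hζn _ (by linarith)]
    linarith
  have hQK : ∀ i, ‖(1 - EK.Pm d L) * EK.Km d L lam (ζ s i) (ζ t i)‖ ≤
      (2 + 4 / (ε * q)) * Λ := by
    intro i
    refine (EK.QK_norm lam δ hδ0 hδ1 hρ ε hε0 hε1 (ζ s i) (ζ t i)
      (by rw [hζn t ht0]; exact ht)).trans ?_
    have h1 : ‖ζ t i - ζ s i‖ * (2 * ((L : ℝ) ^ d) ^ ε / (ε * δ)) ≤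
        ((L : ℝ) ^ 2)⁻¹ * (2 * Λ / (ε * δ)) :=
      mul_le_mul_of_nonneg_right (hζd i) (by positivity)
    have h2 : ((L : ℝ) ^ 2)⁻¹ * (2 * Λ / (ε * δ)) = 4 / (ε * q) * Λ := by
      rw [hδ]; field_simp; ring
    rw [h2] at h1
    linarith
  have hK : ∀ i, σ i = σ (i + 1) → ‖EK.Km d L lam (ζ s i) (ζ t i)‖ ≤ B * Λ := by
    intro i hi
    have hdec : EK.Km d L lam (ζ s i) (ζ t i) =
        (1 - EK.Pm d L) * EK.Km d L lam (ζ s i) (ζ t i) +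
          EK.Pm d L * EK.Km d L lam (ζ s i) (ζ t i) := by
      rw [sub_mul, one_mul, sub_add_cancel]
    rw [hdec]
    refine (norm_add_le _ _).trans ?_
    have hr0 := EK.rs_nonneg d L lam
    have h1 := (EK.res_norm lam δ hδ0 hδ1 hρ ε hε0 hε1 (ζ t i)
      (by rw [hζn t ht0]; exact ht)).1
    have h2 := EK.PK_norm lam (ζ s i) (ζ t i) h1 (by rw [hζn s hs0]; linarith) c hc0 (by
      have := EK.low (mSign E (σ i)) (EK.mSign_norm E hE2 _) (t * EK.rs d L lam) (by positivity)
      rw [EK.mSign_im] at this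
      refine (hcE.trans this).trans (le_of_eq ?_)
      congr 2
      simp only [hζ]
      rw [← hi]
      push_cast
      ring)
    have h3 : 2 / c ≤ 2 / c * Λ := le_mul_of_one_le_right (by positivity) hΛ1
    have h4 := hQK i
    rw [hB, add_mul _ (2 / c)]
    linarith
  have hU : Ukernel d L lam E s t n σ A =
      EK.Top (fun i => EK.Km d L lam (ζ s i) (ζ t i)) A := rfl
  unfold QremSet
  rw [hU, EK.foldr_Top _ _ _ (Finset.sort_nodup _ _)]
  have hfin := EK.Top_bound (fun i => if i ∈ J.sort (· ≤ ·) then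
      (1 - EK.Pm d L) * EK.Km d L lam (ζ s i) (ζ t i) else EK.Km d L lam (ζ s i) (ζ t i))
      A (B * Λ) (by
    intro i
    split_ifs with h
    · refine (hQK i).trans ?_
      apply mul_le_mul_of_nonneg_right _ (by linarith)
      rw [hB]
      have : 0 < 2 / c := by positivity
      linarith
    · apply hK
      by_contra hne
      apply h
      rw [Finset.mem_sort]
      exact hJ (by simp [hne])) a
  refine hfin.trans ?_
  apply mul_le_mul_of_nonneg_right _ (Real.iSup_nonneg fun b => norm_nonneg _)
  rw [mul_pow]
  apply mul_le_mul_of_nonneg_left _ (by positivity)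
  rw [hΛ, ← Real.rpow_natCast (_ ^ ε) n, ← Real.rpow_natCast (L : ℝ) d,
    ← Real.rpow_mul (by positivity), ← Real.rpow_mul (by positivity)]
  apply Real.rpow_le_rpow_of_exponent_le (by linarith)
  have h1 : ε ≤ τ / (n * d) := min_le_right _ _
  rw [le_div_iff₀ (by positivity)] at h1
  linarith

end EKsec

/-- **Evolution kernel estimate with zero modes removed (Lemma A.2).**
For `1 − L^{−2} ≤ s ≤ t < 1` and any `J ⊇ I_diff(σ) = {i : σ_i ≠ σ_{i+1}}`, for every
`τ > 0` there is a constant `C > 0`, depending only on `n, d, C₀, κ, τ`, such that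
`‖Q^(J) ∘ U^{(n)}_{s,t,σ} ∘ 𝒜‖_∞ ≤ C·L^τ·‖𝒜‖_∞`. -/
theorem evolution_kernel_zero_mode_removed (n d : ℕ) [NeZero n] (hn : 2 ≤ n) (hd : 3 ≤ d)
    (C₀ κ τ : ℝ) (hC₀ : 1 ≤ C₀) (hκ0 : 0 < κ) (hκ1 : κ < 1) (hτ : 0 < τ) :
    ∃ C : ℝ, 0 < C ∧
      ∀ (L : ℕ) [NeZero L], 2 ≤ L →
        ∀ lam : ℝ, C₀⁻¹ ≤ lam → lam ≤ C₀ →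
          ∀ E : ℝ, |E| ≤ 2 - κ →
            ∀ σ : Fin n → Bool,
              ∀ s t : ℝ, 1 - ((L : ℝ) ^ 2)⁻¹ ≤ s → s ≤ t → t < 1 →
                ∀ J : Finset (Fin n),
                  (Finset.univ.filter fun i : Fin n => σ i ≠ σ (i + 1)) ⊆ J →
                  ∀ (A : (Fin n → Fin d → ZMod L) → ℂ) (a : Fin n → Fin d → ZMod L),
                    ‖QremSet d L n J (Ukernel d L lam E s t n σ A) a‖ ≤
                      C * (L : ℝ) ^ τ * (⨆ b : Fin n → Fin d → ZMod L, ‖A b‖) := by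
  exact EK_main n d hn hd C₀ κ τ hC₀ hκ0 hκ1 hτ
end
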